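/- Fix τ ∈ (0,1) and ε, D > 0. Then there exists N₀ such that for all N ≥ N₀ and all integers d with N^τ ≤ d ≤ N/2 and dN even, the uniform random d-regular graph satisfies: with probability at least 1 − N^{−D}, every eigenvector u ∈ ℝ^N of 𝒜 with ‖u‖₂ = 1 satisfies ‖u‖_∞ ≤ N^{ε − 1/2}. -/

import Mathlib

open MeasureTheory Filter Matrix
open scoped ENNReal NNReal

noncomputable section

/-- `A` is the adjacency matrix of a `d`-regular graph on `N` vertices:
a symmetric `{0,1}`-matrix with zero diagonal and all row sums equal to `d`. -/
def IsAdjMat (N d : ℕ) (A : Matrix (Fin N) (Fin N) ℝ) : Prop :=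
  A.IsSymm ∧ (∀ i, A i i = 0) ∧ (∀ i j, A i j = 0 ∨ A i j = 1) ∧ ∀ i, ∑ j, A i j = d

/-- probability of an event under the uniform measure on `d`-regular graphs on `N` vertices. -/
def PrReg (N d : ℕ) (E : Matrix (Fin N) (Fin N) ℝ → Prop) : ℝ :=
  (Nat.card {A : Matrix (Fin N) (Fin N) ℝ // IsAdjMat N d A ∧ E A} : ℝ) /
    (Nat.card {A : Matrix (Fin N) (Fin N) ℝ // IsAdjMat N d A} : ℝ)

/-- expectation of `F` under the uniform measure on `d`-regular graphs on `N` vertices. -/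
def Ereg (N d : ℕ) (F : Matrix (Fin N) (Fin N) ℝ → ℝ) : ℝ :=
  (∑ᶠ A : {A : Matrix (Fin N) (Fin N) ℝ // IsAdjMat N d A}, F A.1) /
    (Nat.card {A : Matrix (Fin N) (Fin N) ℝ // IsAdjMat N d A} : ℝ)

/-- the `k`-th largest eigenvalue (`1`-based indexing) of a symmetric matrix. -/
def eigval {N : ℕ} (A : Matrix (Fin N) (Fin N) ℝ) (k : ℕ) : ℝ :=
  if hA : A.IsHermitian then
    if h : k - 1 < N then
      hA.eigenvalues (Tuple.sort hA.eigenvalues (Fin.rev ⟨k - 1, h⟩))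
    else 0
  else 0

/-- `q = √(d(N-d)/N)`. -/
def qval (N d : ℕ) : ℝ := Real.sqrt ((d : ℝ) * ((N : ℝ) - (d : ℝ)) / (N : ℝ))

/-- the projection `P⊥ = I - e eᵀ` (complex version). -/
def Pperp (N : ℕ) : Matrix (Fin N) (Fin N) ℂ := 1 - Matrix.of fun _ _ => (N : ℂ)⁻¹

/-- the projection `P⊥ = I - e eᵀ` (real version). -/
def PperpR (N : ℕ) : Matrix (Fin N) (Fin N) ℝ := 1 - Matrix.of fun _ _ => (N : ℝ)⁻¹

/-- the Green function `G(z) = P⊥ (q⁻¹𝒜 - z)⁻¹ P⊥`. -/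
def greenM (N d : ℕ) (A : Matrix (Fin N) (Fin N) ℝ) (z : ℂ) : Matrix (Fin N) (Fin N) ℂ :=
  Pperp N * (((qval N d : ℝ) : ℂ)⁻¹ • A.map Complex.ofReal - z • 1)⁻¹ * Pperp N

/-- the normalized trace `Ḡ(z) = N⁻¹ Tr G(z)`. -/
def gbar (N d : ℕ) (A : Matrix (Fin N) (Fin N) ℝ) (z : ℂ) : ℂ :=
  (N : ℂ)⁻¹ * (greenM N d A z).trace

/-- the Stieltjes transform of the semicircle density `ϱ(x) = (2π)⁻¹ √((4-x²)₊)`. -/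
def mSC (z : ℂ) : ℂ :=
  ∫ x in (-2 : ℝ)..2, ((Real.sqrt (4 - x ^ 2) / (2 * Real.pi) : ℝ) : ℂ) / ((x : ℂ) - z)

/-- `(Δ_{ij})_{xy} = δ_{ix}δ_{jy} + δ_{iy}δ_{jx}`. -/
def Dmat (N : ℕ) (i j : Fin N) : Matrix (Fin N) (Fin N) ℝ :=
  Matrix.of fun x y =>
    (if i = x ∧ j = y then (1 : ℝ) else 0) + (if i = y ∧ j = x then (1 : ℝ) else 0)

/-- `ξ_{ij}^{kl} = Δ_{ij} + Δ_{kl} - Δ_{ik} - Δ_{jl}`. -/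
def xiMat (N : ℕ) (i j k l : Fin N) : Matrix (Fin N) (Fin N) ℝ :=
  Dmat N i j + Dmat N k l - Dmat N i k - Dmat N j l

/-- `χ_{ij}^{kl}(𝒜) = 𝒜_{ij}(1-𝒜_{ik})𝒜_{kl}(1-𝒜_{jl})`. -/
def chi (N : ℕ) (A : Matrix (Fin N) (Fin N) ℝ) (i j k l : Fin N) : ℝ :=
  A i j * (1 - A i k) * A k l * (1 - A j l)

/-- `𝓜_{ij}(F(𝒜)) = max_{k,l} |F(𝒜 + ξ_{ij}^{kl})|`. -/
def Mmax (N : ℕ) (i j : Fin N) (F : Matrix (Fin N) (Fin N) ℝ → ℝ)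
    (A : Matrix (Fin N) (Fin N) ℝ) : ℝ :=
  ⨆ p : Fin N × Fin N, |F (A + xiMat N i j p.1 p.2)|

instance matMS (N : ℕ) : MeasurableSpace (Matrix (Fin N) (Fin N) ℝ) :=
  show MeasurableSpace (Fin N → Fin N → ℝ) from inferInstance

/-- the GOE: push-forward of independent centered Gaussians with variance `(1+δ_{ij})/N`
on the upper triangle under the symmetrization map. -/
def goeMeasure (N : ℕ) : Measure (Matrix (Fin N) (Fin N) ℝ) :=
  Measure.map (fun f => Matrix.of fun i j => if i ≤ j then f (i, j) else f (j, i))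
    (Measure.pi fun p : Fin N × Fin N =>
      ProbabilityTheory.gaussianReal 0 (if p.1 = p.2 then 2 / N else 1 / N))

/-- the uniform probability measure on `d`-regular graphs on `N` vertices, as a measure. -/
def uniformReg (N d : ℕ) : Measure (Matrix (Fin N) (Fin N) ℝ) :=
  (Nat.card {A : Matrix (Fin N) (Fin N) ℝ // IsAdjMat N d A} : ℝ≥0∞)⁻¹ •
    Measure.sum fun A : {A : Matrix (Fin N) (Fin N) ℝ // IsAdjMat N d A} =>
      Measure.dirac A.1

/-- the matrix flow `A(t) = e^{-t/2} q⁻¹𝒜 + √(1-e^{-t}) W`, where `W = P⊥ H P⊥`. -/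
def flowMat (N d : ℕ) (A H : Matrix (Fin N) (Fin N) ℝ) (t : ℝ) : Matrix (Fin N) (Fin N) ℝ :=
  Real.exp (-t / 2) • ((qval N d)⁻¹ • A) +
    Real.sqrt (1 - Real.exp (-t)) • (PperpR N * H * PperpR N)

/-- the Green function of the matrix flow, `G(t;z) = P⊥ (A(t) - z)⁻¹ P⊥`. -/
def greenFlow (N d : ℕ) (A H : Matrix (Fin N) (Fin N) ℝ) (t : ℝ) (z : ℂ) :
    Matrix (Fin N) (Fin N) ℂ :=
  Pperp N * ((flowMat N d A H t).map Complex.ofReal - z • 1)⁻¹ * Pperp N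

/-- the normalized trace of the Green function of the flow. -/
def gbarFlow (N d : ℕ) (A H : Matrix (Fin N) (Fin N) ℝ) (t : ℝ) (z : ℂ) : ℂ :=
  (N : ℂ)⁻¹ * (greenFlow N d A H t z).trace

/-!
Switching two edges `ij`, `lk` to `ik`, `lj`, with suitable weights at a fixed vertex `i`, is a
reversible dynamics for the uniform measure. By antisymmetry, an observable that is close to a drift
of this dynamics has moments controlled by its variation under a single switching. Resolvent
expansion bounds this variation, and identifies the drift, for two kinds of observables: the
fluctuation of neighbourhood sums of Green function entries, and the error in the self-consistent
equation `(z + Ḡ) G = -P⊥`. If `G` is bounded at `z`, both are thus small with overwhelming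
probability, and stability of the equation improves the bound on `G`. Lowering `Im z` by a small
power of `N` worsens the bound by at most a small power, so a finite induction descends from
`Im z = N` to `Im z = N ^ (-1 + ε)`, where the bound `Im G_ii ≤ N ^ ε` delocalizes the eigenvectors
of nearby eigenvalues.
-/

section RegularGraphs

variable {N d : ℕ} {A : Matrix (Fin N) (Fin N) ℝ}

theorem IsAdjMat.symm_apply (hA : IsAdjMat N d A) (i j : Fin N) : A i j = A j i := hA.1.apply j i

theorem IsAdjMat.apply_self (hA : IsAdjMat N d A) (i : Fin N) : A i i = 0 := hA.2.1 i

theorem IsAdjMat.eq_zero_or_one (hA : IsAdjMat N d A) (i j : Fin N) : A i j = 0 ∨ A i j = 1 :=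
  hA.2.2.1 i j

theorem IsAdjMat.sum_row (hA : IsAdjMat N d A) (i : Fin N) : ∑ j, A i j = d := hA.2.2.2 i

theorem IsAdjMat.sum_col (hA : IsAdjMat N d A) (j : Fin N) : ∑ i, A i j = d := by
  simpa only [hA.symm_apply _ j] using hA.sum_row j

theorem IsAdjMat.nonneg (hA : IsAdjMat N d A) (i j : Fin N) : 0 ≤ A i j := by
  rcases hA.eq_zero_or_one i j with h | h <;> simp [h]

variable (N d) in
theorem finite_setOf_isAdjMat : {A : Matrix (Fin N) (Fin N) ℝ | IsAdjMat N d A}.Finite := by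
  have h01 : {A : Fin N → Fin N → ℝ |
      ∀ i, A i ∈ {r : Fin N → ℝ | ∀ j, r j ∈ ({0, 1} : Set ℝ)}}.Finite :=
    Set.Finite.pi' fun _ => Set.Finite.pi' fun _ => Set.toFinite _
  exact h01.subset fun A hA => hA.2.2.1

variable (N d) in
/-- The finite set of adjacency matrices of `d`-regular graphs on `N` vertices, over which all
averages are taken. -/
def regularGraphs : Finset (Matrix (Fin N) (Fin N) ℝ) := (finite_setOf_isAdjMat N d).toFinset

@[simp]
theorem mem_regularGraphs : A ∈ regularGraphs N d ↔ IsAdjMat N d A := by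
  simp [regularGraphs]

end RegularGraphs

/-! ### Switchings -/

section Switching

variable {N d : ℕ} {A : Matrix (Fin N) (Fin N) ℝ} {i l j k : Fin N}

/-- The vector `e_i - e_l`; a switching is a symmetrized product of two such vectors. -/
def switchVec (i l : Fin N) : Fin N → ℝ := Pi.single i 1 - Pi.single l 1

/-- The switching that removes the edges `ij`, `lk` and adds the edges `ik`, `lj`. -/
def switch (A : Matrix (Fin N) (Fin N) ℝ) (i l j k : Fin N) : Matrix (Fin N) (Fin N) ℝ :=
  A + (vecMulVec (switchVec i l) (switchVec k j) + vecMulVec (switchVec k j) (switchVec i l))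

/-- The indicator that the edge `ij` can be moved to `lj`. -/
def movable (A : Matrix (Fin N) (Fin N) ℝ) (i l j : Fin N) : ℝ :=
  A i j * (1 - A l j) * if j = l then 0 else 1

/-- The number of edges at `i` that can be moved to `l`. -/
def movableCount (A : Matrix (Fin N) (Fin N) ℝ) (i l : Fin N) : ℝ := ∑ j, movable A i l j

/-- The weight of the switching `switch A i l j k` in the reversible dynamics at the vertex `i`.
Dividing by `movableCount A i l` makes both marginals over `j` and over `k` indicators. -/
def switchWeight (A : Matrix (Fin N) (Fin N) ℝ) (i l j k : Fin N) : ℝ :=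
  movable A i l j * movable A l i k / movableCount A i l

theorem switchVec_apply (i l x : Fin N) :
    switchVec i l x = (if x = i then 1 else 0) - if x = l then 1 else 0 := by
  simp [switchVec, Pi.single_apply]

theorem sum_switchVec (i l : Fin N) : ∑ x, switchVec i l x = 0 := by simp [switchVec]

theorem switch_apply (A : Matrix (Fin N) (Fin N) ℝ) (i l j k x y : Fin N) :
    switch A i l j k x y =
      A x y + (switchVec i l x * switchVec k j y + switchVec k j x * switchVec i l y) := rfl

theorem switch_switch (A : Matrix (Fin N) (Fin N) ℝ) (i l j k : Fin N) :
    switch (switch A i l j k) i l k j = A := by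
  ext x y
  simp only [switch_apply, switchVec_apply]
  ring

theorem movable_eq (hA : IsAdjMat N d A) (i l j : Fin N) :
    movable A i l j = A i j - (if j = l then A i l else 0) - A i j * A l j := by
  unfold movable
  split_ifs with hjl
  · subst hjl; simp [hA.apply_self]
  · ring

theorem movable_nonneg (hA : IsAdjMat N d A) (i l j : Fin N) : 0 ≤ movable A i l j := by
  unfold movable
  rcases hA.eq_zero_or_one i j with h | h <;> rcases hA.eq_zero_or_one l j with h' | h' <;>
    split_ifs <;> simp [h, h']

theorem movable_le (hA : IsAdjMat N d A) (i l j : Fin N) : movable A i l j ≤ A i j := by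
  unfold movable
  rcases hA.eq_zero_or_one i j with h | h <;> rcases hA.eq_zero_or_one l j with h' | h' <;>
    split_ifs <;> simp [h, h']

theorem movableCount_eq (hA : IsAdjMat N d A) (i l : Fin N) :
    movableCount A i l = d - A i l - ∑ j, A i j * A l j := by
  simp [movableCount, movable_eq hA, Finset.sum_sub_distrib, hA.sum_row]

theorem movableCount_comm (hA : IsAdjMat N d A) (i l : Fin N) :
    movableCount A l i = movableCount A i l := by
  simp only [movableCount_eq hA, hA.symm_apply l i, mul_comm]

theorem movableCount_nonneg (hA : IsAdjMat N d A) (i l : Fin N) : 0 ≤ movableCount A i l :=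
  Finset.sum_nonneg fun j _ => movable_nonneg hA i l j

theorem movableCount_le (hA : IsAdjMat N d A) (i l : Fin N) : movableCount A i l ≤ d :=
  hA.sum_row i ▸ Finset.sum_le_sum fun j _ => movable_le hA i l j

theorem movable_eq_zero (hA : IsAdjMat N d A) (h : movableCount A i l = 0) (j : Fin N) :
    movable A i l j = 0 :=
  (Finset.sum_eq_zero_iff_of_nonneg fun j _ => movable_nonneg hA i l j).1 h j (Finset.mem_univ j)

theorem switchWeight_nonneg (hA : IsAdjMat N d A) (i l j k : Fin N) :
    0 ≤ switchWeight A i l j k :=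
  div_nonneg (mul_nonneg (movable_nonneg hA _ _ _) (movable_nonneg hA _ _ _))
    (movableCount_nonneg hA _ _)

theorem sum_switchWeight_right (hA : IsAdjMat N d A) (i l j : Fin N) :
    ∑ k, switchWeight A i l j k = movable A i l j := by
  simp only [switchWeight, ← Finset.sum_div, ← Finset.mul_sum]
  change movable A i l j * movableCount A l i / movableCount A i l = _
  rw [movableCount_comm hA]
  by_cases h : movableCount A i l = 0
  · simp [movable_eq_zero hA h]
  · field_simp

theorem sum_switchWeight_left (hA : IsAdjMat N d A) (i l k : Fin N) :
    ∑ j, switchWeight A i l j k = movable A l i k := by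
  simp only [switchWeight, ← Finset.sum_div, ← Finset.sum_mul]
  change movableCount A i l * movable A l i k / movableCount A i l = _
  by_cases h : movableCount A i l = 0
  · simp [movable_eq_zero hA ((movableCount_comm hA i l).trans h)]
  · field_simp

/-- The four vertices support the switching `switch A i l j k`: `ij` and `lk` are edges, while `lj`
and `ik` are pairs of distinct non-adjacent vertices. -/
structure Switchable (A : Matrix (Fin N) (Fin N) ℝ) (i l j k : Fin N) : Prop where
  apply_ij : A i j = 1
  apply_lj : A l j = 0
  apply_lk : A l k = 1
  apply_ik : A i k = 0
  ne_lj : j ≠ l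
  ne_ik : k ≠ i

theorem Switchable.of_switchWeight_ne_zero (hA : IsAdjMat N d A)
    (h : switchWeight A i l j k ≠ 0) : Switchable A i l j k := by
  have eq_one : ∀ {i l j}, movable A i l j ≠ 0 → A i j = 1 ∧ A l j = 0 ∧ j ≠ l := by
    intro i l j h
    unfold movable at h
    rcases hA.eq_zero_or_one i j with h₁ | h₁ <;> rcases hA.eq_zero_or_one l j with h₂ | h₂ <;>
      simp_all
  obtain ⟨hij, hlj, hjl⟩ := eq_one fun h' : movable A i l j = 0 => h (by simp [switchWeight, h'])
  obtain ⟨hlk, hik, hki⟩ := eq_one fun h' : movable A l i k = 0 => h (by simp [switchWeight, h'])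
  exact ⟨hij, hlj, hlk, hik, hjl, hki⟩

theorem Switchable.ne_il (h : Switchable A i l j k) : i ≠ l := by
  rintro rfl; exact zero_ne_one (h.apply_lj.symm.trans h.apply_ij)

theorem Switchable.ne_jk (h : Switchable A i l j k) : j ≠ k := by
  rintro rfl; exact zero_ne_one (h.apply_ik.symm.trans h.apply_ij)

theorem Switchable.ne_ij (h : Switchable A i l j k) (hA : IsAdjMat N d A) : i ≠ j := by
  rintro rfl; exact zero_ne_one ((hA.apply_self _).symm.trans h.apply_ij)

theorem Switchable.ne_lk (h : Switchable A i l j k) (hA : IsAdjMat N d A) : l ≠ k := by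
  rintro rfl; exact zero_ne_one ((hA.apply_self _).symm.trans h.apply_lk)

theorem Switchable.switch_row_left (h : Switchable A i l j k) (hA : IsAdjMat N d A) (y : Fin N) :
    switch A i l j k i y = A i y + switchVec k j y := by
  simp [switch_apply, switchVec_apply, h.ne_il, h.ne_ik.symm, h.ne_ij hA]

theorem Switchable.switch_row_right (h : Switchable A i l j k) (hA : IsAdjMat N d A) (y : Fin N) :
    switch A i l j k l y = A l y - switchVec k j y := by
  simp [switch_apply, switchVec_apply, h.ne_il.symm, h.ne_lk hA, h.ne_lj.symm]
  ring

theorem Switchable.isAdjMat_switch (h : Switchable A i l j k) (hA : IsAdjMat N d A) :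
    IsAdjMat N d (switch A i l j k) := by
  have hil := h.ne_il
  have hjk := h.ne_jk
  have hij := h.ne_ij hA
  have hlk := h.ne_lk hA
  obtain ⟨Aij, Alj, Alk, Aik, hlj, hik⟩ := h
  have hsymm : (switch A i l j k).IsSymm := by
    refine Matrix.IsSymm.ext fun x y => ?_
    rw [switch_apply, switch_apply, hA.symm_apply]
    ring
  refine ⟨hsymm, fun x => ?_, fun x y => ?_, fun x => ?_⟩
  · simp only [switch_apply, hA.apply_self, switchVec_apply]
    grind
  · have := hA.eq_zero_or_one x y
    have := hA.symm_apply x y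
    simp only [switch_apply, switchVec_apply]
    grind
  · simp only [switch_apply, Finset.sum_add_distrib, ← Finset.mul_sum, sum_switchVec, hA.sum_row]
    ring

theorem Switchable.switchWeight_switch (h : Switchable A i l j k) (hA : IsAdjMat N d A) :
    switchWeight (switch A i l j k) i l k j = switchWeight A i l j k := by
  have hB := h.isAdjMat_switch hA
  have row_i := h.switch_row_left hA
  have row_l := h.switch_row_right hA
  have hjk := h.ne_jk
  have hij := h.ne_ij hA
  have hlk := h.ne_lk hA
  obtain ⟨Aij, Alj, Alk, Aik, hlj, hik⟩ := h
  have hcount : movableCount (switch A i l j k) i l = movableCount A i l := by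
    rw [movableCount_eq hA, movableCount_eq hB, row_i]
    congr 1
    · simp [switchVec_apply, hlk, hlj.symm]
    · refine Finset.sum_congr rfl fun y _ => ?_
      rw [row_i, row_l]
      simp only [switchVec_apply]
      grind
  simp only [switchWeight, hcount, movable, row_i, row_l, switchVec_apply]
  simp [Aij, Alj, Alk, Aik, hlj, hik, hjk, hjk.symm, hlk.symm, hij.symm]

end Switching

section SwitchSum

variable {N d : ℕ} {A : Matrix (Fin N) (Fin N) ℝ}
variable {E : Type*} [NormedAddCommGroup E] [NormedSpace ℝ E]

/-- The weighted sum of `Ψ l j k` over all switchings of `A` at the vertex `i`. -/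
def switchSum (A : Matrix (Fin N) (Fin N) ℝ) (i : Fin N) (Ψ : Fin N → Fin N → Fin N → E) : E :=
  ∑ l, ∑ j, ∑ k, switchWeight A i l j k • Ψ l j k

theorem switchSum_mono (hA : IsAdjMat N d A) (i : Fin N) {Ψ Φ : Fin N → Fin N → Fin N → ℝ}
    (h : ∀ l j k, Switchable A i l j k → Ψ l j k ≤ Φ l j k) :
    switchSum A i Ψ ≤ switchSum A i Φ := by
  refine Finset.sum_le_sum fun l _ => Finset.sum_le_sum fun j _ => Finset.sum_le_sum fun k _ => ?_
  by_cases h0 : switchWeight A i l j k = 0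
  · simp [h0]
  · exact smul_le_smul_of_nonneg_left (h l j k (.of_switchWeight_ne_zero hA h0))
      (switchWeight_nonneg hA _ _ _ _)

theorem switchSum_nonneg (hA : IsAdjMat N d A) (i : Fin N) {Ψ : Fin N → Fin N → Fin N → ℝ}
    (h : ∀ l j k, 0 ≤ Ψ l j k) : 0 ≤ switchSum A i Ψ :=
  Finset.sum_nonneg fun _ _ => Finset.sum_nonneg fun _ _ => Finset.sum_nonneg fun _ _ =>
    smul_nonneg (switchWeight_nonneg hA _ _ _ _) (h _ _ _)

theorem norm_switchSum_le (hA : IsAdjMat N d A) (i : Fin N) (Ψ : Fin N → Fin N → Fin N → E) :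
    ‖switchSum A i Ψ‖ ≤ switchSum A i fun l j k => ‖Ψ l j k‖ := by
  refine norm_sum_le_of_le _ fun l _ => norm_sum_le_of_le _ fun j _ => norm_sum_le_of_le _
    fun k _ => ?_
  rw [norm_smul, Real.norm_of_nonneg (switchWeight_nonneg hA _ _ _ _), smul_eq_mul]

theorem switchSum_add (A : Matrix (Fin N) (Fin N) ℝ) (i : Fin N)
    (Ψ Φ : Fin N → Fin N → Fin N → E) :
    switchSum A i (fun l j k => Ψ l j k + Φ l j k) = switchSum A i Ψ + switchSum A i Φ := by
  simp only [switchSum, smul_add, Finset.sum_add_distrib]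

theorem switchSum_sub (A : Matrix (Fin N) (Fin N) ℝ) (i : Fin N)
    (Ψ Φ : Fin N → Fin N → Fin N → E) :
    switchSum A i (fun l j k => Ψ l j k - Φ l j k) = switchSum A i Ψ - switchSum A i Φ := by
  simp only [switchSum, smul_sub, Finset.sum_sub_distrib]

theorem map_switchSum {F : Type*} [NormedAddCommGroup F] [NormedSpace ℝ F]
    (A : Matrix (Fin N) (Fin N) ℝ) (i : Fin N) (T : E →ₗ[ℝ] F) (Ψ : Fin N → Fin N → Fin N → E) :
    T (switchSum A i Ψ) = switchSum A i fun l j k => T (Ψ l j k) := by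
  simp only [switchSum, map_sum, map_smul]

theorem switchSum_const_mul (A : Matrix (Fin N) (Fin N) ℝ) (i : Fin N) (c : ℝ)
    (Ψ : Fin N → Fin N → Fin N → ℝ) :
    switchSum A i (fun l j k => c * Ψ l j k) = c * switchSum A i Ψ :=
  (map_switchSum A i (LinearMap.mulLeft ℝ c) Ψ).symm

theorem switchSum_left (hA : IsAdjMat N d A) (i : Fin N) (f : Fin N → Fin N → E) :
    switchSum A i (fun l j _ => f l j) = ∑ l, ∑ j, movable A i l j • f l j := by
  simp only [switchSum, ← Finset.sum_smul, sum_switchWeight_right hA]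

theorem switchSum_right (hA : IsAdjMat N d A) (i : Fin N) (f : Fin N → Fin N → E) :
    switchSum A i (fun l _ k => f l k) = ∑ l, ∑ k, movable A l i k • f l k := by
  refine Finset.sum_congr rfl fun l _ => ?_
  rw [Finset.sum_comm]
  simp only [← Finset.sum_smul, sum_switchWeight_left hA]

theorem switchSum_le_of_le (hA : IsAdjMat N d A) (i : Fin N) {Ψ : Fin N → Fin N → Fin N → ℝ}
    {c : ℝ} (hc : 0 ≤ c) (h : ∀ l j k, Switchable A i l j k → Ψ l j k ≤ c) :
    switchSum A i Ψ ≤ N * (d * c) :=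
  calc switchSum A i Ψ ≤ switchSum A i fun _ _ _ => c := switchSum_mono hA i h
    _ = ∑ l, movableCount A i l * c := by
      simp only [switchSum_left hA i fun _ _ => c, smul_eq_mul, ← Finset.sum_mul, movableCount]
    _ ≤ ∑ _l : Fin N, d * c :=
      Finset.sum_le_sum fun l _ => mul_le_mul_of_nonneg_right (movableCount_le hA i l) hc
    _ = N * (d * c) := by simp

theorem norm_switchSum_le_of_le (hA : IsAdjMat N d A) (i : Fin N)
    {Ψ : Fin N → Fin N → Fin N → E} {c : ℝ} (hc : 0 ≤ c)
    (h : ∀ l j k, Switchable A i l j k → ‖Ψ l j k‖ ≤ c) : ‖switchSum A i Ψ‖ ≤ N * (d * c) :=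
  (norm_switchSum_le hA i Ψ).trans (switchSum_le_of_le hA i hc h)

end SwitchSum

/-! ### Exchangeable pairs and moment bounds -/

section ExchangeablePair

theorem norm_norm_pow_smul_sub_le {E : Type*} [NormedAddCommGroup E] [NormedSpace ℝ E] (p : ℕ)
    (x y : E) :
    ‖‖x‖ ^ p • x - ‖y‖ ^ p • y‖ ≤ (p + 1) * (‖x‖ ^ p + ‖y‖ ^ p) * ‖x - y‖ := by
  set M := max ‖x‖ ‖y‖ with hM
  have hMp : M ^ p ≤ ‖x‖ ^ p + ‖y‖ ^ p := by
    rcases max_choice ‖x‖ ‖y‖ with h | h <;> rw [hM, h] <;> simp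
  have hdiff : |‖x‖ ^ p - ‖y‖ ^ p| * ‖y‖ ≤ p * M ^ p * ‖x - y‖ := by
    rcases p.eq_zero_or_pos with rfl | hp
    · simp
    calc |‖x‖ ^ p - ‖y‖ ^ p| * ‖y‖ ≤ |‖x‖ - ‖y‖| * p * M ^ (p - 1) * M := by
          have h := abs_pow_sub_pow_le ‖x‖ ‖y‖ p
          rw [abs_norm, abs_norm] at h
          exact mul_le_mul h (le_max_right _ _) (norm_nonneg _) (by positivity)
      _ = p * M ^ p * |‖x‖ - ‖y‖| := by rw [mul_assoc, pow_sub_one_mul hp.ne']; ring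
      _ ≤ p * M ^ p * ‖x - y‖ := by gcongr; exact abs_norm_sub_norm_le x y
  calc ‖‖x‖ ^ p • x - ‖y‖ ^ p • y‖
      = ‖‖x‖ ^ p • (x - y) + (‖x‖ ^ p - ‖y‖ ^ p) • y‖ := by congr 1; module
    _ ≤ ‖x‖ ^ p * ‖x - y‖ + |‖x‖ ^ p - ‖y‖ ^ p| * ‖y‖ := by
        refine (norm_add_le _ _).trans_eq ?_
        rw [norm_smul, norm_smul, norm_pow, norm_norm, Real.norm_eq_abs]
    _ ≤ (‖x‖ ^ p + p * M ^ p) * ‖x - y‖ := by linarith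
    _ ≤ (p + 1) * (‖x‖ ^ p + ‖y‖ ^ p) * ‖x - y‖ := by
        gcongr
        nlinarith [pow_nonneg (norm_nonneg y) p, mul_le_mul_of_nonneg_left hMp (Nat.cast_nonneg p)]

/-- Antisymmetry replaces the moment of `X` against `F` by one against `X - X ∘ σ`. -/
theorem abs_sum_moment_inner_le {E : Type*} [NormedAddCommGroup E] [InnerProductSpace ℝ E]
    {α : Type*} {s : Finset α} {w : α → ℝ} {σ : α → α}
    (hw : ∀ a ∈ s, 0 ≤ w a) (hσs : ∀ a ∈ s, σ a ∈ s) (hσσ : ∀ a ∈ s, σ (σ a) = a)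
    (hwσ : ∀ a ∈ s, w (σ a) = w a) (X : α → E) {F : α → E} (hF : ∀ a ∈ s, F (σ a) = -F a)
    (p : ℕ) :
    |∑ a ∈ s, w a * inner ℝ (‖X a‖ ^ p • X a) (F a)| ≤
      (p + 1) * ∑ a ∈ s, w a * (‖X a‖ ^ p * (‖F a‖ * ‖X a - X (σ a)‖)) := by
  have sum_comp (f : α → ℝ) : ∑ a ∈ s, f (σ a) = ∑ a ∈ s, f a :=
    Finset.sum_nbij' σ σ hσs hσs hσσ hσσ fun _ _ => rfl
  set Y : α → E := fun a => ‖X a‖ ^ p • X a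
  have hsymm : 2 * ∑ a ∈ s, w a * inner ℝ (Y a) (F a) =
      ∑ a ∈ s, w a * inner ℝ (Y a - Y (σ a)) (F a) := by
    rw [two_mul]
    nth_rw 2 [← sum_comp]
    rw [← Finset.sum_add_distrib]
    refine Finset.sum_congr rfl fun a ha => ?_
    rw [hwσ a ha, hF a ha, inner_neg_right, inner_sub_left]
    ring
  have hσsum : ∑ a ∈ s, w a * (‖X (σ a)‖ ^ p * (‖F a‖ * ‖X a - X (σ a)‖)) =
      ∑ a ∈ s, w a * (‖X a‖ ^ p * (‖F a‖ * ‖X a - X (σ a)‖)) := by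
    rw [← sum_comp]
    refine Finset.sum_congr rfl fun a ha => ?_
    rw [hwσ a ha, hσσ a ha, hF a ha, norm_neg, norm_sub_rev]
  have hbound : |∑ a ∈ s, w a * inner ℝ (Y a - Y (σ a)) (F a)| ≤
      ∑ a ∈ s, ((p + 1) * (w a * (‖X a‖ ^ p * (‖F a‖ * ‖X a - X (σ a)‖))) +
        (p + 1) * (w a * (‖X (σ a)‖ ^ p * (‖F a‖ * ‖X a - X (σ a)‖)))) := by
    refine Finset.abs_sum_le_sum_abs _ _ |>.trans (Finset.sum_le_sum fun a ha => ?_)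
    rw [abs_mul, abs_of_nonneg (hw a ha)]
    calc w a * |inner ℝ (Y a - Y (σ a)) (F a)| ≤ w a * (‖Y a - Y (σ a)‖ * ‖F a‖) :=
          mul_le_mul_of_nonneg_left (abs_real_inner_le_norm _ _) (hw a ha)
      _ ≤ w a * ((p + 1) * (‖X a‖ ^ p + ‖X (σ a)‖ ^ p) * ‖X a - X (σ a)‖ * ‖F a‖) := by
          have := hw a ha
          gcongr
          exact norm_norm_pow_smul_sub_le p _ _
      _ = _ := by ring
  rw [Finset.sum_add_distrib, ← Finset.mul_sum, ← Finset.mul_sum, hσsum, ← hsymm, abs_mul,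
    abs_two] at hbound
  linarith

theorem pow_mul_le_pow_succ_div_four_add {a b : ℝ} (ha : 0 ≤ a) (hb : 0 ≤ b) (k : ℕ) :
    a ^ k * b ≤ a ^ (k + 1) / 4 + (4 * b) ^ (k + 1) := by
  rcases le_total (4 * b) a with h | h
  · have : 0 ≤ (4 * b) ^ (k + 1) := by positivity
    rw [pow_succ a]
    nlinarith [pow_nonneg ha k]
  · have hle : a ^ k * b ≤ (4 * b) ^ k * b := by gcongr
    have : 0 ≤ (4 * b) ^ k * b := by positivity
    have : 0 ≤ a ^ (k + 1) := by positivity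
    rw [pow_succ (4 * b)]
    linarith

/-- The constant in the moment bound of order `2m + 2`. -/
def momentConst (m : ℕ) : ℝ := 2 * ((4 * (2 * m + 1)) ^ (m + 1) + 4 ^ (2 * m + 2))

theorem momentConst_pos (m : ℕ) : 0 < momentConst m := by unfold momentConst; positivity

variable {α : Type*} {s : Finset α} {g V e : α → ℝ} {m : ℕ}

theorem sum_pow_le_of_moment_ineq (hg : ∀ a ∈ s, 0 ≤ g a) (hV : ∀ a ∈ s, 0 ≤ V a)
    (he : ∀ a ∈ s, 0 ≤ e a)
    (hm : ∑ a ∈ s, g a ^ (2 * m + 2) ≤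
      (2 * m + 1) * ∑ a ∈ s, g a ^ (2 * m) * V a + ∑ a ∈ s, g a ^ (2 * m + 1) * e a) :
    ∑ a ∈ s, g a ^ (2 * m + 2) ≤
      2 * ∑ a ∈ s, ((4 * ((2 * m + 1) * V a)) ^ (m + 1) + (4 * e a) ^ (2 * m + 2)) := by
  have hVsum : (2 * m + 1) * ∑ a ∈ s, g a ^ (2 * m) * V a ≤
      ∑ a ∈ s, (g a ^ (2 * m + 2) / 4 + (4 * ((2 * m + 1) * V a)) ^ (m + 1)) := by
    rw [Finset.mul_sum]
    refine Finset.sum_le_sum fun a ha => ?_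
    have hVa := hV a ha
    have h := pow_mul_le_pow_succ_div_four_add (sq_nonneg (g a))
      (by positivity : 0 ≤ (2 * m + 1) * V a) m
    rw [← pow_mul, ← pow_mul, mul_add_one 2 m] at h
    linarith
  have hesum : ∑ a ∈ s, g a ^ (2 * m + 1) * e a ≤
      ∑ a ∈ s, (g a ^ (2 * m + 2) / 4 + (4 * e a) ^ (2 * m + 2)) :=
    Finset.sum_le_sum fun a ha => pow_mul_le_pow_succ_div_four_add (hg a ha) (he a ha) (2 * m + 1)
  rw [Finset.sum_add_distrib, ← Finset.sum_div] at hVsum hesum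
  rw [Finset.sum_add_distrib]
  linarith

open Classical in
theorem pow_mul_card_filter_le_sum_pow (hg : ∀ a ∈ s, 0 ≤ g a) {t : ℝ} (ht : 0 ≤ t) (n : ℕ) :
    t ^ n * ((s.filter fun a => ¬ g a ≤ t).card : ℝ) ≤ ∑ a ∈ s, g a ^ n := by
  rw [mul_comm, ← nsmul_eq_mul]
  refine (Finset.card_nsmul_le_sum _ _ _ fun a ha => ?_).trans
    (Finset.sum_le_sum_of_subset_of_nonneg (Finset.filter_subset _ _) fun a ha _ =>
      pow_nonneg (hg a ha) n)
  exact pow_le_pow_left₀ ht (not_le.1 (Finset.mem_filter.1 ha).2).le n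

open Classical in
/-- Markov's inequality for the moment of order `2m + 2`: the bound `β` is only needed on the
event `Q`, at the price of the crude bound `L` on its complement. -/
theorem pow_mul_card_filter_le_of_moment_ineq (hg : ∀ a ∈ s, 0 ≤ g a) (hV : ∀ a ∈ s, 0 ≤ V a)
    (he : ∀ a ∈ s, 0 ≤ e a)
    (hm : ∑ a ∈ s, g a ^ (2 * m + 2) ≤
      (2 * m + 1) * ∑ a ∈ s, g a ^ (2 * m) * V a + ∑ a ∈ s, g a ^ (2 * m + 1) * e a)
    {Q : α → Prop} {β L U : ℝ} (hβ : 1 ≤ β) (hL : 0 ≤ L) (hU : 0 ≤ U)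
    (hQ : ∀ a ∈ s, Q a → V a ≤ β ^ 2 ∧ e a ≤ β) (hall : ∀ a ∈ s, V a ≤ L ^ 2 ∧ e a ≤ L) :
    U ^ (2 * m + 2) * ((s.filter fun a => ¬ g a ≤ β * U).card : ℝ) ≤
      momentConst m * (s.card + L ^ (2 * m + 2) * ((s.filter fun a => ¬ Q a).card : ℝ)) := by
  have hpt : ∀ a ∈ s, ∀ b : ℝ, V a ≤ b ^ 2 ∧ e a ≤ b →
      2 * ((4 * ((2 * m + 1) * V a)) ^ (m + 1) + (4 * e a) ^ (2 * m + 2)) ≤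
        momentConst m * b ^ (2 * m + 2) := by
    intro a ha b h
    have hVa := hV a ha
    have hea := he a ha
    calc 2 * ((4 * ((2 * m + 1) * V a)) ^ (m + 1) + (4 * e a) ^ (2 * m + 2))
        ≤ 2 * ((4 * ((2 * m + 1) * b ^ 2)) ^ (m + 1) + (4 * b) ^ (2 * m + 2)) := by
          gcongr <;> simp [h]
      _ = momentConst m * b ^ (2 * m + 2) := by
          rw [momentConst, ← mul_assoc 4, mul_pow _ (b ^ 2), mul_pow 4 b, ← pow_mul]; ring
  have hterm : ∀ a ∈ s, 2 * ((4 * ((2 * m + 1) * V a)) ^ (m + 1) + (4 * e a) ^ (2 * m + 2)) ≤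
      momentConst m * (β ^ (2 * m + 2) * (1 + L ^ (2 * m + 2) * if ¬ Q a then 1 else 0)) := by
    intro a ha
    have hβ1 : 1 ≤ β ^ (2 * m + 2) := one_le_pow₀ hβ
    by_cases hQa : Q a
    · simpa [hQa] using hpt a ha β (hQ a ha hQa)
    · refine (hpt a ha L (hall a ha)).trans ?_
      simp only [hQa, not_false_eq_true, if_true, mul_one]
      have hL0 : 0 ≤ L ^ (2 * m + 2) := by positivity
      exact mul_le_mul_of_nonneg_left (by nlinarith) (momentConst_pos m).le
  have hmarkov := pow_mul_card_filter_le_sum_pow hg (by positivity : 0 ≤ β * U) (2 * m + 2)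
  have hsum := hmarkov.trans (sum_pow_le_of_moment_ineq hg hV he hm)
  rw [Finset.mul_sum] at hsum
  have := hsum.trans (Finset.sum_le_sum hterm)
  rw [← Finset.mul_sum, ← Finset.mul_sum, Finset.sum_add_distrib, ← Finset.mul_sum,
    Finset.sum_boole, Finset.sum_const, nsmul_one, mul_pow] at this
  refine le_of_mul_le_mul_left ?_ (by positivity : 0 < β ^ (2 * m + 2))
  linarith

end ExchangeablePair

section Concentration

variable {N d : ℕ} {E : Type*} [NormedAddCommGroup E] [InnerProductSpace ℝ E]

/-- The generator-like sum `∑ (φ A j - φ A' k)` over the switchings `A'` of `A` at `i`. Its summand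
is antisymmetric under exchanging `A` and `A'`. -/
def switchDrift (φ : Matrix (Fin N) (Fin N) ℝ → Fin N → E) (i : Fin N)
    (A : Matrix (Fin N) (Fin N) ℝ) : E :=
  switchSum A i fun l j k => φ A j - φ (switch A i l j k) k

/-- The total variation of `X` along the switchings at `i`, weighted by the drift increments. -/
def switchVariation (φ : Matrix (Fin N) (Fin N) ℝ → Fin N → E) (i : Fin N)
    (X : Matrix (Fin N) (Fin N) ℝ → E) (A : Matrix (Fin N) (Fin N) ℝ) : ℝ :=
  switchSum A i fun l j k => ‖φ A j - φ (switch A i l j k) k‖ * ‖X A - X (switch A i l j k)‖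

open Classical in
/-- All pairs of a regular graph and a switching of it at `i`. -/
def switchings (N d : ℕ) (i : Fin N) :
    Finset (Matrix (Fin N) (Fin N) ℝ × Fin N × Fin N × Fin N) :=
  (regularGraphs N d ×ˢ Finset.univ).filter fun p => switchWeight p.1 i p.2.1 p.2.2.1 p.2.2.2 ≠ 0

theorem mem_switchings {i : Fin N} {p : Matrix (Fin N) (Fin N) ℝ × Fin N × Fin N × Fin N} :
    p ∈ switchings N d i ↔
      IsAdjMat N d p.1 ∧ switchWeight p.1 i p.2.1 p.2.2.1 p.2.2.2 ≠ 0 := by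
  simp [switchings]

theorem sum_switchings (i : Fin N)
    (Ψ : Matrix (Fin N) (Fin N) ℝ → Fin N → Fin N → Fin N → ℝ) :
    ∑ A ∈ regularGraphs N d, switchSum A i (Ψ A) =
      ∑ p ∈ switchings N d i,
        switchWeight p.1 i p.2.1 p.2.2.1 p.2.2.2 * Ψ p.1 p.2.1 p.2.2.1 p.2.2.2 := by
  rw [switchings, Finset.sum_filter_of_ne fun p _ h => left_ne_zero_of_mul h, Finset.sum_product]
  simp only [switchSum, smul_eq_mul, Fintype.sum_prod_type]

theorem abs_sum_moment_inner_switchDrift_le (φ : Matrix (Fin N) (Fin N) ℝ → Fin N → E) (i : Fin N)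
    (X : Matrix (Fin N) (Fin N) ℝ → E) (p : ℕ) :
    |∑ A ∈ regularGraphs N d, inner ℝ (‖X A‖ ^ p • X A) (switchDrift φ i A)| ≤
      (p + 1) * ∑ A ∈ regularGraphs N d, ‖X A‖ ^ p * switchVariation φ i X A := by
  have hdrift : ∀ A, inner ℝ (‖X A‖ ^ p • X A) (switchDrift φ i A) = switchSum A i fun l j k =>
      inner ℝ (‖X A‖ ^ p • X A) (φ A j - φ (switch A i l j k) k) := fun A =>
    map_switchSum A i (innerₛₗ ℝ (‖X A‖ ^ p • X A)) _
  have hvar : ∀ A, ‖X A‖ ^ p * switchVariation φ i X A = switchSum A i fun l j k =>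
      ‖X A‖ ^ p * (‖φ A j - φ (switch A i l j k) k‖ * ‖X A - X (switch A i l j k)‖) := fun A =>
    map_switchSum A i (LinearMap.mulLeft ℝ (‖X A‖ ^ p)) _
  simp only [hdrift, hvar]
  rw [sum_switchings i fun A l j k => inner ℝ (‖X A‖ ^ p • X A) (φ A j - φ (switch A i l j k) k),
    sum_switchings i fun A l j k =>
      ‖X A‖ ^ p * (‖φ A j - φ (switch A i l j k) k‖ * ‖X A - X (switch A i l j k)‖)]
  refine abs_sum_moment_inner_le (s := switchings N d i)
    (w := fun p => switchWeight p.1 i p.2.1 p.2.2.1 p.2.2.2)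
    (σ := fun p => (switch p.1 i p.2.1 p.2.2.1 p.2.2.2, p.2.1, p.2.2.2, p.2.2.1))
    (F := fun p => φ p.1 p.2.2.1 - φ (switch p.1 i p.2.1 p.2.2.1 p.2.2.2) p.2.2.2)
    ?_ ?_ ?_ ?_ (fun p => X p.1) ?_ p
  · exact fun p hp => switchWeight_nonneg (mem_switchings.1 hp).1 _ _ _ _
  · intro p hp
    obtain ⟨hA, hw⟩ := mem_switchings.1 hp
    have hsw := Switchable.of_switchWeight_ne_zero hA hw
    exact mem_switchings.2 ⟨hsw.isAdjMat_switch hA, (hsw.switchWeight_switch hA).trans_ne hw⟩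
  · exact fun p _ => by simp only [switch_switch]
  · intro p hp
    obtain ⟨hA, hw⟩ := mem_switchings.1 hp
    exact (Switchable.of_switchWeight_ne_zero hA hw).switchWeight_switch hA
  · exact fun p _ => by simp only [switch_switch, neg_sub]

theorem switchDrift_eq {A : Matrix (Fin N) (Fin N) ℝ} (hA : IsAdjMat N d A)
    (φ : Matrix (Fin N) (Fin N) ℝ → Fin N → E) (i : Fin N) :
    switchDrift φ i A = (N : ℝ) • ∑ j, A i j • φ A j - (d : ℝ) • ∑ j, φ A j
      - ∑ j, A i j • φ A j + (d : ℝ) • φ A i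
      + switchSum A i fun l j k => φ A k - φ (switch A i l j k) k := by
  have hsplit : switchDrift φ i A =
      switchSum A i (fun _ j _ => φ A j) - switchSum A i (fun _ _ k => φ A k)
      + switchSum A i fun l j k => φ A k - φ (switch A i l j k) k := by
    rw [← switchSum_sub, ← switchSum_add, switchDrift]
    simp only [sub_add_sub_cancel]
  have hl : ∀ l, ∑ j, movable A i l j • φ A j - ∑ j, movable A l i j • φ A j =
      ∑ j, A i j • φ A j - A i l • φ A l - ∑ j, A l j • φ A j + A l i • φ A i := by
    intro l
    have hmov : ∀ i l : Fin N, ∑ j, movable A i l j • φ A j =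
        ∑ j, A i j • φ A j - A i l • φ A l - ∑ j, (A i j * A l j) • φ A j := by
      intro i l
      simp [movable_eq hA, sub_smul, Finset.sum_sub_distrib, ite_smul]
    rw [hmov, hmov]
    simp only [mul_comm]
    abel
  rw [hsplit, switchSum_left hA i fun _ j => φ A j, switchSum_right hA i fun _ k => φ A k,
    ← Finset.sum_sub_distrib]
  congr 1
  simp only [hl, Finset.sum_add_distrib, Finset.sum_sub_distrib]
  rw [Finset.sum_comm (f := fun l j => A l j • φ A j)]
  simp only [← Finset.sum_smul, hA.sum_col, ← Finset.smul_sum, Finset.sum_const,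
    Finset.card_univ, Fintype.card_fin, Nat.cast_smul_eq_nsmul]
  abel

open Classical in
/-- The number (as a real) of `d`-regular graphs on `N` vertices that violate `P`. -/
def numViolating (N d : ℕ) (P : Matrix (Fin N) (Fin N) ℝ → Prop) : ℝ :=
  ((regularGraphs N d).filter fun A => ¬ P A).card

theorem numViolating_nonneg (P : Matrix (Fin N) (Fin N) ℝ → Prop) : 0 ≤ numViolating N d P :=
  Nat.cast_nonneg _

theorem sum_norm_pow_le_of_switchDrift (hN : 0 < N) (φ : Matrix (Fin N) (Fin N) ℝ → Fin N → E)
    (i : Fin N) (X : Matrix (Fin N) (Fin N) ℝ → E) (m : ℕ) :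
    ∑ A ∈ regularGraphs N d, ‖X A‖ ^ (2 * m + 2) ≤
      (2 * m + 1) * ∑ A ∈ regularGraphs N d, ‖X A‖ ^ (2 * m) * (switchVariation φ i X A / N) +
      ∑ A ∈ regularGraphs N d, ‖X A‖ ^ (2 * m + 1) *
        (‖switchDrift φ i A - (N : ℝ) • X A‖ / N) := by
  have hN' : (0 : ℝ) < N := Nat.cast_pos.2 hN
  have hsplit : ∀ A, N * ‖X A‖ ^ (2 * m + 2) =
      inner ℝ (‖X A‖ ^ (2 * m) • X A) (switchDrift φ i A) -
      inner ℝ (‖X A‖ ^ (2 * m) • X A) (switchDrift φ i A - (N : ℝ) • X A) := by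
    intro A
    rw [← inner_sub_right, sub_sub_cancel, real_inner_smul_left, real_inner_smul_right,
      real_inner_self_eq_norm_sq]
    ring
  have herror : ∀ A, -inner ℝ (‖X A‖ ^ (2 * m) • X A) (switchDrift φ i A - (N : ℝ) • X A) ≤
      ‖X A‖ ^ (2 * m + 1) * ‖switchDrift φ i A - (N : ℝ) • X A‖ := by
    intro A
    refine (neg_le_abs _).trans ((abs_real_inner_le_norm _ _).trans_eq ?_)
    rw [norm_smul, norm_pow, norm_norm, pow_succ]
  have hstein := (le_abs_self _).trans
    (abs_sum_moment_inner_switchDrift_le (d := d) φ i X (2 * m))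
  push_cast at hstein
  simp only [mul_div_assoc', ← Finset.sum_div]
  rw [← add_div, le_div_iff₀ hN', mul_comm, Finset.mul_sum]
  calc ∑ A ∈ regularGraphs N d, N * ‖X A‖ ^ (2 * m + 2)
      ≤ ∑ A ∈ regularGraphs N d, (inner ℝ (‖X A‖ ^ (2 * m) • X A) (switchDrift φ i A) +
          ‖X A‖ ^ (2 * m + 1) * ‖switchDrift φ i A - (N : ℝ) • X A‖) :=
        Finset.sum_le_sum fun A _ => by linarith [hsplit A, herror A]
    _ ≤ _ := by rw [Finset.sum_add_distrib]; gcongr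

/-- Concentration by exchangeable pairs: if `switchDrift φ i ≈ N • X`, then `X` is small up to a
factor `U` except on few graphs. -/
theorem pow_mul_numViolating_le (hN : 0 < N) {φ : Matrix (Fin N) (Fin N) ℝ → Fin N → E} {i : Fin N}
    {X : Matrix (Fin N) (Fin N) ℝ → E} (m : ℕ) {Q : Matrix (Fin N) (Fin N) ℝ → Prop}
    {β L U : ℝ} (hβ : 1 ≤ β) (hL : 0 ≤ L) (hU : 0 ≤ U)
    (hQ : ∀ A, IsAdjMat N d A → Q A →
      switchVariation φ i X A ≤ N * β ^ 2 ∧ ‖switchDrift φ i A - (N : ℝ) • X A‖ ≤ N * β)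
    (hall : ∀ A, IsAdjMat N d A →
      switchVariation φ i X A ≤ N * L ^ 2 ∧ ‖switchDrift φ i A - (N : ℝ) • X A‖ ≤ N * L) :
    U ^ (2 * m + 2) * numViolating N d (fun A => ‖X A‖ ≤ β * U) ≤
      momentConst m * ((regularGraphs N d).card + L ^ (2 * m + 2) * numViolating N d Q) := by
  have hN' : (0 : ℝ) < N := Nat.cast_pos.2 hN
  refine pow_mul_card_filter_le_of_moment_ineq (g := fun A => ‖X A‖) (fun A _ => norm_nonneg _)
    (fun A hA => div_nonneg ?_ hN'.le) (fun A _ => by positivity)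
    (sum_norm_pow_le_of_switchDrift hN φ i X m) hβ hL hU ?_ ?_
  · exact switchSum_nonneg (mem_regularGraphs.1 hA) i fun l j k => by positivity
  · intro A hA hQA
    simpa only [div_le_iff₀' hN'] using hQ A (mem_regularGraphs.1 hA) hQA
  · intro A hA
    simpa only [div_le_iff₀' hN'] using hall A (mem_regularGraphs.1 hA)

end Concentration

/-! ### Reduced resolvents -/

section ReducedResolvent

variable {n : Type*} [Fintype n] [DecidableEq n] {P H H' : Matrix n n ℂ} {z w : ℂ}

/-- `P` is an orthogonal projection onto a reducing subspace of the Hermitian matrix `H`. -/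
structure IsReducing (P H : Matrix n n ℂ) : Prop where
  isHermitian : H.IsHermitian
  isHermitian_proj : P.IsHermitian
  isIdempotent : P * P = P
  commute : P * H = H * P

/-- The resolvent of `H` compressed to the range of the projection `P`. -/
def reducedResolvent (P H : Matrix n n ℂ) (z : ℂ) : Matrix n n ℂ := P * (H - z • 1)⁻¹ * P

theorem isUnit_sub_smul_one_of_isHermitian (hH : H.IsHermitian) (hz : z.im ≠ 0) :
    IsUnit (H - z • 1) := by
  have hspec : z ∉ spectrum ℂ H := by
    rw [hH.spectrum_eq_image_range]
    rintro ⟨x, -, rfl⟩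
    exact hz (Complex.ofReal_im x)
  rw [spectrum.notMem_iff, Algebra.algebraMap_eq_smul_one] at hspec
  simpa using hspec.neg

namespace IsReducing

variable (h : IsReducing P H) (h' : IsReducing P H')
include h

theorem proj_mul_reducedResolvent (z : ℂ) :
    P * reducedResolvent P H z = reducedResolvent P H z := by
  rw [reducedResolvent, ← mul_assoc, ← mul_assoc, h.isIdempotent]

theorem reducedResolvent_mul_proj (z : ℂ) :
    reducedResolvent P H z * P = reducedResolvent P H z := by
  rw [reducedResolvent, mul_assoc, h.isIdempotent]

theorem sub_smul_mul_reducedResolvent (hz : z.im ≠ 0) :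
    (H - z • 1) * reducedResolvent P H z = P := by
  have hcomm : (H - z • 1) * P = P * (H - z • 1) := by
    rw [sub_mul, mul_sub, h.commute]; simp
  have hinv := Matrix.mul_nonsing_inv _
    ((Matrix.isUnit_iff_isUnit_det _).1 (isUnit_sub_smul_one_of_isHermitian h.isHermitian hz))
  rw [reducedResolvent, ← mul_assoc, ← mul_assoc, hcomm, mul_assoc P, hinv, mul_one, h.isIdempotent]

theorem conjTranspose_reducedResolvent (z : ℂ) :
    (reducedResolvent P H z)ᴴ = reducedResolvent P H (star z) := by
  simp only [reducedResolvent, conjTranspose_mul, conjTranspose_nonsing_inv, conjTranspose_sub,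
    conjTranspose_smul, conjTranspose_one, h.isHermitian.eq, h.isHermitian_proj.eq, mul_assoc]

theorem reducedResolvent_mul_sub_smul (hz : z.im ≠ 0) :
    reducedResolvent P H z * (H - z • 1) = P := by
  have hconj := congrArg conjTranspose
    (h.sub_smul_mul_reducedResolvent (z := star z) (by simpa using hz))
  simpa [h.conjTranspose_reducedResolvent, h.isHermitian.eq, h.isHermitian_proj.eq] using hconj

theorem mul_reducedResolvent (hz : z.im ≠ 0) :
    H * reducedResolvent P H z = z • reducedResolvent P H z + P := by
  refine sub_eq_iff_eq_add'.1 (Eq.trans ?_ (h.sub_smul_mul_reducedResolvent hz))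
  rw [sub_mul, smul_mul_assoc, one_mul]

include h' in
theorem reducedResolvent_sub_reducedResolvent (hz : z.im ≠ 0) :
    reducedResolvent P H z - reducedResolvent P H' z =
      reducedResolvent P H z * (H' - H) * reducedResolvent P H' z := by
  rw [← sub_sub_sub_cancel_right H' H (z • 1), mul_sub, sub_mul, mul_assoc,
    h'.sub_smul_mul_reducedResolvent hz, h.reducedResolvent_mul_sub_smul hz,
    h.reducedResolvent_mul_proj, h'.proj_mul_reducedResolvent]

theorem reducedResolvent_sub_reducedResolvent_of_param (hz : z.im ≠ 0) (hw : w.im ≠ 0) :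
    reducedResolvent P H z - reducedResolvent P H w =
      (z - w) • (reducedResolvent P H z * reducedResolvent P H w) := by
  have hmid : reducedResolvent P H z * ((H - w • 1) - (H - z • 1)) * reducedResolvent P H w =
      reducedResolvent P H z - reducedResolvent P H w := by
    rw [mul_sub, sub_mul, mul_assoc, h.sub_smul_mul_reducedResolvent hw,
      h.reducedResolvent_mul_sub_smul hz, h.reducedResolvent_mul_proj, h.proj_mul_reducedResolvent]
  rw [← hmid, sub_sub_sub_cancel_left, ← sub_smul]
  simp

/-- The Ward identity. -/
theorem sum_norm_sq_reducedResolvent_row (hz : z.im ≠ 0) (x : n) :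
    ∑ j, ‖reducedResolvent P H z x j‖ ^ 2 = (reducedResolvent P H z x x).im / z.im := by
  have hstar : (star z).im ≠ 0 := by simpa using hz
  have hdiff := h.reducedResolvent_sub_reducedResolvent_of_param hz hstar
  rw [← h.conjTranspose_reducedResolvent] at hdiff
  have hxx := congrFun₂ hdiff x x
  have hsum : (reducedResolvent P H z * (reducedResolvent P H z)ᴴ) x x =
      ((∑ j, ‖reducedResolvent P H z x j‖ ^ 2 : ℝ) : ℂ) := by
    simp only [Matrix.mul_apply, conjTranspose_apply, RCLike.star_def, Complex.mul_conj']
    push_cast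
    rfl
  rw [Matrix.sub_apply, Matrix.smul_apply, hsum, conjTranspose_apply, smul_eq_mul] at hxx
  have him := congrArg Complex.im hxx
  rw [Complex.im_mul_ofReal] at him
  simp only [RCLike.star_def, Complex.sub_im, Complex.conj_im] at him
  rw [eq_div_iff hz]
  linarith

theorem sum_norm_sq_reducedResolvent_col (hz : z.im ≠ 0) (x : n) :
    ∑ j, ‖reducedResolvent P H z j x‖ ^ 2 = (reducedResolvent P H z x x).im / z.im := by
  have hrow := h.sum_norm_sq_reducedResolvent_row (z := star z) (by simpa using hz) x
  rw [← h.conjTranspose_reducedResolvent] at hrow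
  simpa [conjTranspose_apply] using hrow

theorem norm_reducedResolvent_le (hz : z.im ≠ 0) (x y : n) :
    ‖reducedResolvent P H z x y‖ ≤ 1 / |z.im| := by
  have hrow : ∀ y, ‖reducedResolvent P H z x y‖ ^ 2 ≤ ‖reducedResolvent P H z x x‖ / |z.im| := by
    intro y
    calc ‖reducedResolvent P H z x y‖ ^ 2 ≤ ∑ j, ‖reducedResolvent P H z x j‖ ^ 2 :=
          Finset.single_le_sum (f := fun j => ‖reducedResolvent P H z x j‖ ^ 2)
            (fun _ _ => sq_nonneg _) (Finset.mem_univ y)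
      _ ≤ |(reducedResolvent P H z x x).im / z.im| :=
          (h.sum_norm_sq_reducedResolvent_row hz x).trans_le (le_abs_self _)
      _ ≤ ‖reducedResolvent P H z x x‖ / |z.im| := by
          rw [abs_div]
          gcongr
          exact Complex.abs_im_le_norm _
  have hdiag : ‖reducedResolvent P H z x x‖ ≤ 1 / |z.im| := by
    rcases (norm_nonneg (reducedResolvent P H z x x)).eq_or_lt with h0 | h0
    · rw [← h0]; positivity
    · refine le_of_mul_le_mul_left ?_ h0
      rw [← sq, mul_one_div]
      exact hrow x
  refine abs_le_of_sq_le_sq' ?_ (by positivity) |>.2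
  refine (hrow y).trans ?_
  rw [sq, div_eq_mul_one_div]
  gcongr

theorem norm_reducedResolvent_sub_sq_le (hz : 0 < z.im) (hw : 0 < w.im) (x y : n) :
    ‖reducedResolvent P H z x y - reducedResolvent P H w x y‖ ^ 2 ≤
      ‖z - w‖ ^ 2 * ((‖reducedResolvent P H z x x‖ / z.im) *
        (‖reducedResolvent P H w y y‖ / w.im)) := by
  rw [← Matrix.sub_apply, h.reducedResolvent_sub_reducedResolvent_of_param hz.ne' hw.ne',
    Matrix.smul_apply, smul_eq_mul, norm_mul, mul_pow, Matrix.mul_apply]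
  have hrow : ∑ j, ‖reducedResolvent P H z x j‖ ^ 2 ≤ ‖reducedResolvent P H z x x‖ / z.im := by
    rw [h.sum_norm_sq_reducedResolvent_row hz.ne']
    gcongr
    exact Complex.im_le_norm _
  have hcol : ∑ j, ‖reducedResolvent P H w j y‖ ^ 2 ≤ ‖reducedResolvent P H w y y‖ / w.im := by
    rw [h.sum_norm_sq_reducedResolvent_col hw.ne']
    gcongr
    exact Complex.im_le_norm _
  gcongr
  calc ‖∑ j, reducedResolvent P H z x j * reducedResolvent P H w j y‖ ^ 2
      ≤ (∑ j, ‖reducedResolvent P H z x j‖ * ‖reducedResolvent P H w j y‖) ^ 2 := by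
        gcongr
        exact (norm_sum_le _ _).trans_eq (by simp only [norm_mul])
    _ ≤ (∑ j, ‖reducedResolvent P H z x j‖ ^ 2) * ∑ j, ‖reducedResolvent P H w j y‖ ^ 2 :=
        Finset.sum_mul_sq_le_sq_mul_sq _ _ _
    _ ≤ _ := by gcongr

theorem sq_norm_sub_norm_reducedResolvent_div_le {E η M K : ℝ} (hη : 0 < η) (hM : 1 ≤ M)
    (hK : ∀ x y, ‖reducedResolvent P H ⟨E, η⟩ x y‖ ≤ K) (x y : n) :
    (‖reducedResolvent P H ⟨E, η / M⟩ x y‖ - ‖reducedResolvent P H ⟨E, η⟩ x y‖) ^ 2 ≤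
      ‖reducedResolvent P H ⟨E, η / M⟩ x x‖ * (M * K) := by
  have hdist : ‖(⟨E, η / M⟩ : ℂ) - ⟨E, η⟩‖ ≤ η := by
    have him : (⟨E, η / M⟩ : ℂ) - ⟨E, η⟩ = ((η / M - η : ℝ) : ℂ) * Complex.I := by
      apply Complex.ext <;> simp
    rw [him, norm_mul, Complex.norm_I, mul_one, Complex.norm_real, Real.norm_eq_abs, abs_le]
    have hpos : 0 < η / M := by positivity
    have hle : η / M ≤ η := div_le_self hη.le hM
    constructor <;> linarith
  calc _ ≤ ‖reducedResolvent P H ⟨E, η / M⟩ x y - reducedResolvent P H ⟨E, η⟩ x y‖ ^ 2 :=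
        sq_le_sq.2 ((abs_norm_sub_norm_le _ _).trans (le_abs_self _))
    _ ≤ ‖(⟨E, η / M⟩ : ℂ) - ⟨E, η⟩‖ ^ 2 * ((‖reducedResolvent P H ⟨E, η / M⟩ x x‖ / (η / M)) *
          (‖reducedResolvent P H ⟨E, η⟩ y y‖ / η)) :=
        h.norm_reducedResolvent_sub_sq_le (z := ⟨E, η / M⟩) (w := ⟨E, η⟩) (by positivity) hη x y
    _ ≤ η ^ 2 * ((‖reducedResolvent P H ⟨E, η / M⟩ x x‖ / (η / M)) * (K / η)) := by
        gcongr
        exact hK y y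
    _ = _ := by field_simp

theorem norm_reducedResolvent_div_le {E η M K : ℝ} (hη : 0 < η) (hM : 1 ≤ M)
    (hK : ∀ x y, ‖reducedResolvent P H ⟨E, η⟩ x y‖ ≤ K) (x y : n) :
    ‖reducedResolvent P H ⟨E, η / M⟩ x y‖ ≤ 4 * M * K := by
  have hK0 : 0 ≤ K := (norm_nonneg _).trans (hK x y)
  have hdiff := h.sq_norm_sub_norm_reducedResolvent_div_le hη hM hK x
  have hdiag : ‖reducedResolvent P H ⟨E, η / M⟩ x x‖ ≤ (2 + M) * K := by
    by_contra! hlt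
    have hx := hdiff x
    have hKx := hK x x
    have hmono : (‖reducedResolvent P H ⟨E, η / M⟩ x x‖ - K) ^ 2 ≤
        (‖reducedResolvent P H ⟨E, η / M⟩ x x‖ - ‖reducedResolvent P H ⟨E, η⟩ x x‖) ^ 2 := by
      gcongr
      nlinarith
    have hpos : 0 < ‖reducedResolvent P H ⟨E, η / M⟩ x x‖ := hlt.trans_le' (by positivity)
    nlinarith [mul_pos hpos (sub_pos.2 hlt)]
  have hoff : (‖reducedResolvent P H ⟨E, η / M⟩ x y‖ - ‖reducedResolvent P H ⟨E, η⟩ x y‖) ^ 2 ≤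
      ((2 + M) * K) ^ 2 := by
    refine (hdiff y).trans ?_
    rw [sq]
    gcongr
    linarith
  have hincrease := (abs_le_of_sq_le_sq' hoff (by positivity)).2
  nlinarith [hK x y]

theorem norm_sq_proj_mulVec_le {θ : ℂ} {v : n → ℂ} (hz : z.im ≠ 0)
    (hv : H *ᵥ v = θ • v) (i : n) :
    ‖(P *ᵥ v) i‖ ^ 2 ≤
      ‖θ - z‖ ^ 2 * ((reducedResolvent P H z i i).im / z.im * ∑ x, ‖v x‖ ^ 2) := by
  have heigen : P *ᵥ v = (θ - z) • (reducedResolvent P H z *ᵥ v) := by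
    calc P *ᵥ v = reducedResolvent P H z *ᵥ ((H - z • 1) *ᵥ v) := by
          rw [mulVec_mulVec, h.reducedResolvent_mul_sub_smul hz]
      _ = (θ - z) • (reducedResolvent P H z *ᵥ v) := by
          rw [sub_mulVec, hv, smul_mulVec, one_mulVec, ← sub_smul, mulVec_smul]
  rw [heigen, Pi.smul_apply, norm_smul, mul_pow, ← h.sum_norm_sq_reducedResolvent_row hz]
  gcongr
  calc _ ≤ (∑ x, ‖reducedResolvent P H z i x‖ * ‖v x‖) ^ 2 := by
        gcongr
        exact norm_sum_le_of_le _ fun x _ => norm_mul_le _ _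
    _ ≤ _ := Finset.sum_mul_sq_le_sq_mul_sq _ _ _

end IsReducing

end ReducedResolvent

/-! ### The Green function of a regular graph -/

section GreenFunction

variable {N d : ℕ} {A : Matrix (Fin N) (Fin N) ℝ} {z : ℂ}

/-- The normalized adjacency matrix `q⁻¹𝒜`, over `ℂ`. -/
def scaledAdj (N d : ℕ) (A : Matrix (Fin N) (Fin N) ℝ) : Matrix (Fin N) (Fin N) ℂ :=
  (qval N d : ℂ)⁻¹ • A.map Complex.ofReal

theorem greenM_eq_reducedResolvent (N d : ℕ) (A : Matrix (Fin N) (Fin N) ℝ) (z : ℂ) :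
    greenM N d A z = reducedResolvent (Pperp N) (scaledAdj N d A) z := rfl

theorem Pperp_apply (x y : Fin N) : Pperp N x y = (if x = y then 1 else 0) - (N : ℂ)⁻¹ := by
  simp [Pperp, Matrix.one_apply]

theorem sum_Pperp_col (hN : 0 < N) (y : Fin N) : ∑ x, Pperp N x y = 0 := by
  have hN' : (N : ℂ) ≠ 0 := Nat.cast_ne_zero.2 hN.ne'
  simp [Pperp_apply, hN']

theorem isReducing_scaledAdj (hN : 0 < N) (hA : IsAdjMat N d A) :
    IsReducing (Pperp N) (scaledAdj N d A) := by
  have hrow : ∀ x, ∑ y, (A x y : ℂ) = d := fun x => mod_cast hA.sum_row x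
  have hcol : ∀ y, ∑ x, (A x y : ℂ) = d := fun y => mod_cast hA.sum_col y
  have hP : (Matrix.of fun _ _ => (N : ℂ)⁻¹) * Pperp N = 0 := by
    ext x y
    simp [Matrix.mul_apply, ← Finset.mul_sum, sum_Pperp_col hN]
  refine ⟨?_, ?_, ?_, ?_⟩
  · ext x y; simp [scaledAdj, hA.symm_apply x y]
  · ext x y; simp [Pperp_apply, eq_comm, apply_ite]
  · nth_rw 1 [Pperp]
    rw [sub_mul, hP, one_mul, sub_zero]
  · rw [Pperp, sub_mul, mul_sub, one_mul, mul_one]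
    congr 1
    ext x y
    simp only [scaledAdj, Matrix.mul_apply, Matrix.smul_apply, Matrix.map_apply, Matrix.of_apply,
      smul_eq_mul, ← Finset.mul_sum, ← Finset.sum_mul, hrow, hcol]
    ring

theorem sum_greenM_col (hA : IsAdjMat N d A) (z : ℂ) (y : Fin N) :
    ∑ x, greenM N d A z x y = 0 := by
  have hproj := (isReducing_scaledAdj y.pos hA).proj_mul_reducedResolvent z
  rw [← greenM_eq_reducedResolvent] at hproj
  rw [← hproj]
  simp only [Matrix.mul_apply]
  rw [Finset.sum_comm]
  simp only [← Finset.sum_mul, sum_Pperp_col y.pos, zero_mul, Finset.sum_const_zero]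

theorem sum_smul_greenM (hA : IsAdjMat N d A) (hq : 0 < qval N d) (hz : z.im ≠ 0) (i x : Fin N) :
    ∑ j, A i j • greenM N d A z j x = qval N d * (z * greenM N d A z i x + Pperp N i x) := by
  have hq' : (qval N d : ℂ) ≠ 0 := Complex.ofReal_ne_zero.2 hq.ne'
  have hmul := congrFun₂ ((isReducing_scaledAdj i.pos hA).mul_reducedResolvent hz) i x
  simp only [← greenM_eq_reducedResolvent, Matrix.add_apply, Matrix.smul_apply, smul_eq_mul] at hmul
  rw [← hmul]
  simp [scaledAdj, Matrix.mul_apply, ← Finset.mul_sum, mul_assoc, hq']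

theorem norm_greenM_le (hA : IsAdjMat N d A) (hz : z.im ≠ 0) (x y : Fin N) :
    ‖greenM N d A z x y‖ ≤ 1 / |z.im| :=
  (isReducing_scaledAdj x.pos hA).norm_reducedResolvent_le hz x y

theorem norm_inv_mul_trace_le (hN : 0 < N) {M : Matrix (Fin N) (Fin N) ℂ} {Γ : ℝ}
    (hM : ∀ k, ‖M k k‖ ≤ Γ) : ‖(N : ℂ)⁻¹ * M.trace‖ ≤ Γ := by
  have hN' : (0 : ℝ) < N := Nat.cast_pos.2 hN
  rw [norm_mul, norm_inv, Complex.norm_natCast, inv_mul_le_iff₀ hN']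
  exact (norm_sum_le_of_le _ fun k _ => hM k).trans_eq (by simp)

end GreenFunction

section SwitchedGreenFunction

variable {N d : ℕ} {A : Matrix (Fin N) (Fin N) ℝ} {i l j k : Fin N} {z : ℂ} {Γ : ℝ}

theorem scaledAdj_switch_sub (N d : ℕ) (A : Matrix (Fin N) (Fin N) ℝ) (i l j k : Fin N) :
    scaledAdj N d (switch A i l j k) - scaledAdj N d A = (qval N d : ℂ)⁻¹ •
      (vecMulVec (fun x => (switchVec i l x : ℂ)) (fun x => (switchVec k j x : ℂ)) +
        vecMulVec (fun x => (switchVec k j x : ℂ)) (fun x => (switchVec i l x : ℂ))) := by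
  ext x y
  simp only [scaledAdj, switch_apply, Matrix.sub_apply, Matrix.smul_apply, Matrix.map_apply,
    Matrix.add_apply, vecMulVec_apply, smul_eq_mul]
  push_cast
  ring

theorem mul_scaledAdj_switch_sub_mul (G G' : Matrix (Fin N) (Fin N) ℂ) (a x : Fin N) :
    (G * (scaledAdj N d (switch A i l j k) - scaledAdj N d A) * G') a x =
      (qval N d : ℂ)⁻¹ *
        ((G a i - G a l) * (G' k x - G' j x) + (G a k - G a j) * (G' i x - G' l x)) := by
  have hright : ∀ b c : Fin N, (G *ᵥ fun x => (switchVec b c x : ℂ)) a = G a b - G a c := by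
    intro b c
    simp [Matrix.mulVec, dotProduct, switchVec_apply, mul_sub, apply_ite Complex.ofReal]
  have hleft : ∀ b c : Fin N, ((fun x => (switchVec b c x : ℂ)) ᵥ* G') x =
      G' b x - G' c x := by
    intro b c
    simp [Matrix.vecMul, dotProduct, switchVec_apply, sub_mul, apply_ite Complex.ofReal]
  rw [scaledAdj_switch_sub, Matrix.mul_smul, Matrix.smul_mul, mul_add, add_mul,
    Matrix.mul_vecMulVec, Matrix.mul_vecMulVec, Matrix.vecMulVec_mul, Matrix.vecMulVec_mul]
  simp only [Matrix.smul_apply, Matrix.add_apply, vecMulVec_apply, smul_eq_mul, hright, hleft]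

theorem Switchable.greenM_sub_greenM_switch (hs : Switchable A i l j k) (hA : IsAdjMat N d A)
    (hz : z.im ≠ 0) (a x : Fin N) :
    greenM N d A z a x - greenM N d (switch A i l j k) z a x = (qval N d : ℂ)⁻¹ *
      ((greenM N d A z a i - greenM N d A z a l) *
        (greenM N d (switch A i l j k) z k x - greenM N d (switch A i l j k) z j x) +
       (greenM N d A z a k - greenM N d A z a j) *
        (greenM N d (switch A i l j k) z i x - greenM N d (switch A i l j k) z l x)) := by
  rw [← mul_scaledAdj_switch_sub_mul (A := A)]
  simp only [greenM_eq_reducedResolvent]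
  rw [← (isReducing_scaledAdj i.pos hA).reducedResolvent_sub_reducedResolvent
    (isReducing_scaledAdj i.pos (hs.isAdjMat_switch hA)) hz, Matrix.sub_apply]

theorem norm_sub_mul_sub_le {Γ Γ' : ℝ} {a b c e : ℂ} (ha : ‖a‖ ≤ Γ) (hb : ‖b‖ ≤ Γ)
    (hc : ‖c‖ ≤ Γ') (he : ‖e‖ ≤ Γ') : ‖(a - b) * (c - e)‖ ≤ 4 * Γ * Γ' := by
  have hΓ : 0 ≤ Γ := (norm_nonneg _).trans ha
  calc ‖(a - b) * (c - e)‖ ≤ (Γ + Γ) * (Γ' + Γ') := by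
        rw [norm_mul]
        gcongr
        exacts [norm_sub_le_of_le ha hb, norm_sub_le_of_le hc he]
    _ = 4 * Γ * Γ' := by ring

namespace Switchable

variable (hs : Switchable A i l j k) (hA : IsAdjMat N d A) (hz : z.im ≠ 0) (hq : 0 < qval N d)
  (hΓ : ∀ a b, ‖greenM N d A z a b‖ ≤ Γ)
include hs hA hz hq hΓ

theorem norm_greenM_sub_greenM_switch_le_mul {Γ' : ℝ}
    (hΓ' : ∀ a b, ‖greenM N d (switch A i l j k) z a b‖ ≤ Γ') (a b : Fin N) :
    ‖greenM N d A z a b - greenM N d (switch A i l j k) z a b‖ ≤ 8 * Γ * Γ' / qval N d := by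
  rw [hs.greenM_sub_greenM_switch hA hz, norm_mul, norm_inv, Complex.norm_real,
    Real.norm_of_nonneg hq.le, div_eq_inv_mul]
  gcongr
  refine (norm_add_le_of_le (norm_sub_mul_sub_le (hΓ _ _) (hΓ _ _) (hΓ' _ _) (hΓ' _ _))
    (norm_sub_mul_sub_le (hΓ _ _) (hΓ _ _) (hΓ' _ _) (hΓ' _ _))).trans_eq (by ring)

theorem norm_greenM_switch_le (hΓq : 16 * Γ ≤ qval N d) (a b : Fin N) :
    ‖greenM N d (switch A i l j k) z a b‖ ≤ 2 * Γ := by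
  obtain ⟨p, -, hp⟩ := Finset.exists_max_image (Finset.univ : Finset (Fin N × Fin N))
    (fun p => ‖greenM N d (switch A i l j k) z p.1 p.2‖) ⟨(i, i), Finset.mem_univ _⟩
  set T := ‖greenM N d (switch A i l j k) z p.1 p.2‖
  have hdiff := hs.norm_greenM_sub_greenM_switch_le_mul hA hz hq hΓ
    (fun a b => hp (a, b) (Finset.mem_univ _)) p.1 p.2
  have hhalf : 8 * Γ * T / qval N d ≤ T / 2 := by
    rw [div_le_div_iff₀ hq two_pos]
    nlinarith [norm_nonneg (greenM N d (switch A i l j k) z p.1 p.2)]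
  have hmax : T ≤ ‖greenM N d A z p.1 p.2‖ + T / 2 := by
    have := norm_sub_norm_le (greenM N d (switch A i l j k) z p.1 p.2) (greenM N d A z p.1 p.2)
    rw [norm_sub_rev] at this
    linarith
  linarith [hp (a, b) (Finset.mem_univ _), hΓ p.1 p.2]

theorem norm_greenM_sub_greenM_switch_le (hΓq : 16 * Γ ≤ qval N d) (a b : Fin N) :
    ‖greenM N d A z a b - greenM N d (switch A i l j k) z a b‖ ≤ 16 * Γ ^ 2 / qval N d :=
  (hs.norm_greenM_sub_greenM_switch_le_mul hA hz hq hΓ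
    (hs.norm_greenM_switch_le hA hz hq hΓ hΓq) a b).trans_eq (by ring)

end Switchable

end SwitchedGreenFunction

section RowFluctuation

variable {N d : ℕ} {A : Matrix (Fin N) (Fin N) ℝ} {E : Type*} [NormedAddCommGroup E]

theorem IsAdjMat.norm_sum_smul_le [NormedSpace ℝ E] (hA : IsAdjMat N d A) (i : Fin N)
    {f : Fin N → E} {B : ℝ} (hf : ∀ j, ‖f j‖ ≤ B) : ‖∑ j, A i j • f j‖ ≤ d * B := by
  rw [← hA.sum_row i, Finset.sum_mul]
  refine norm_sum_le_of_le _ fun j _ => ?_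
  rw [norm_smul, Real.norm_of_nonneg (hA.nonneg i j)]
  exact mul_le_mul_of_nonneg_left (hf j) (hA.nonneg i j)

theorem sum_switchVec_smul [NormedSpace ℝ E] (i l : Fin N) (f : Fin N → E) :
    ∑ x, switchVec i l x • f x = f i - f l := by
  simp [switchVec_apply, sub_smul, ite_smul]

variable [InnerProductSpace ℝ E]

/-- The deviation of the sum of `φ A` over the neighbours of `i` from `d` times its average. -/
def rowFluctuation (φ : Matrix (Fin N) (Fin N) ℝ → Fin N → E) (d : ℕ) (i : Fin N)
    (A : Matrix (Fin N) (Fin N) ℝ) : E :=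
  ∑ j, A i j • φ A j - (d / N : ℝ) • ∑ j, φ A j

variable {φ : Matrix (Fin N) (Fin N) ℝ → Fin N → E} {i : Fin N} {B B' : ℝ}

theorem Switchable.norm_rowFluctuation_sub_le {l j k : Fin N} (hs : Switchable A i l j k)
    (hA : IsAdjMat N d A) (hφ' : ∀ a, ‖φ (switch A i l j k) a‖ ≤ B)
    (hdiff : ∀ a, ‖φ A a - φ (switch A i l j k) a‖ ≤ B') :
    ‖rowFluctuation φ d i A - rowFluctuation φ d i (switch A i l j k)‖ ≤
      2 * d * B' + 2 * B := by
  have hN : (0 : ℝ) < N := Nat.cast_pos.2 i.pos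
  have hsplit : rowFluctuation φ d i A - rowFluctuation φ d i (switch A i l j k) =
      ∑ y, A i y • (φ A y - φ (switch A i l j k) y)
        - (d / N : ℝ) • ∑ y, (φ A y - φ (switch A i l j k) y)
        - (φ (switch A i l j k) k - φ (switch A i l j k) j) := by
    simp only [rowFluctuation, hs.switch_row_left hA, add_smul, smul_sub, Finset.sum_sub_distrib,
      Finset.sum_add_distrib, sum_switchVec_smul]
    abel
  have hmean : ‖(d / N : ℝ) • ∑ y, (φ A y - φ (switch A i l j k) y)‖ ≤ d * B' := by
    rw [norm_smul, Real.norm_of_nonneg (by positivity)]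
    calc _ ≤ (d / N : ℝ) * (N * B') := by
          gcongr
          exact (norm_sum_le_of_le _ fun y _ => hdiff y).trans_eq (by simp)
      _ = d * B' := by field_simp
  rw [hsplit]
  refine (norm_sub_le_of_le (norm_sub_le_of_le (hA.norm_sum_smul_le i hdiff) hmean)
    (norm_sub_le_of_le (hφ' k) (hφ' j))).trans_eq (by ring)

theorem switchVariation_rowFluctuation_le (hA : IsAdjMat N d A) (hB' : 0 ≤ B')
    (hφ : ∀ a, ‖φ A a‖ ≤ B)
    (hdiff : ∀ l j k, Switchable A i l j k → ∀ a, ‖φ A a - φ (switch A i l j k) a‖ ≤ B') :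
    switchVariation φ i (rowFluctuation φ d i) A ≤
      N * (d * ((2 * B + B') * (2 * d * B' + 2 * (B + B')))) := by
  have hB : 0 ≤ B := (norm_nonneg _).trans (hφ i)
  refine switchSum_le_of_le hA i (by positivity) fun l j k hs => ?_
  have hφ' : ∀ a, ‖φ (switch A i l j k) a‖ ≤ B + B' := fun a => by
    simpa using norm_sub_le_of_le (hφ a) (hdiff l j k hs a)
  gcongr
  · exact (norm_sub_le_of_le (hφ j) (hφ' k)).trans_eq (by ring)
  · exact hs.norm_rowFluctuation_sub_le hA hφ' (hdiff l j k hs)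

theorem norm_switchDrift_sub_rowFluctuation_le (hA : IsAdjMat N d A) (hB' : 0 ≤ B')
    (hφ : ∀ a, ‖φ A a‖ ≤ B)
    (hdiff : ∀ l j k, Switchable A i l j k → ∀ a, ‖φ A a - φ (switch A i l j k) a‖ ≤ B') :
    ‖switchDrift φ i A - (N : ℝ) • rowFluctuation φ d i A‖ ≤ 2 * d * B + N * (d * B') := by
  have hN : (0 : ℝ) < N := Nat.cast_pos.2 i.pos
  have hsplit : switchDrift φ i A - (N : ℝ) • rowFluctuation φ d i A =
      (d : ℝ) • φ A i - ∑ j, A i j • φ A j +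
        switchSum A i fun l j k => φ A k - φ (switch A i l j k) k := by
    rw [switchDrift_eq hA, rowFluctuation, smul_sub, smul_smul, mul_div_cancel₀ _ hN.ne']
    abel
  have hself : ‖(d : ℝ) • φ A i‖ ≤ d * B := by
    rw [norm_smul, Real.norm_natCast]
    gcongr
    exact hφ i
  rw [hsplit]
  refine (norm_add_le_of_le (norm_sub_le_of_le hself (hA.norm_sum_smul_le i hφ))
    (norm_switchSum_le_of_le hA i hB' fun l j k hs => hdiff l j k hs k)).trans_eq (by ring)

end RowFluctuation

section SwitchSumEstimates

variable {N d : ℕ} {A : Matrix (Fin N) (Fin N) ℝ} {c : ℝ}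

theorem switchSum_right_eq {E : Type*} [NormedAddCommGroup E] [NormedSpace ℝ E]
    (hA : IsAdjMat N d A) (i : Fin N) (f : Fin N → E) :
    switchSum A i (fun _ _ k => f k) = (d : ℝ) • (∑ k, f k - f i - ∑ k, A i k • f k) := by
  have hweight : ∀ k, ∑ l, movable A l i k = d - (if k = i then (d : ℝ) else 0) - d * A i k := by
    intro k
    simp only [movable_eq hA, Finset.sum_sub_distrib, ← Finset.sum_mul, hA.sum_col]
    split_ifs <;> simp [hA.sum_col]
  rw [switchSum_right hA i fun _ k => f k, Finset.sum_comm]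
  simp only [← Finset.sum_smul, hweight]
  simp [sub_smul, smul_sub, Finset.sum_sub_distrib, Finset.smul_sum, smul_smul, ite_smul]

theorem switchSum_le_of_sum_right_le (hA : IsAdjMat N d A) (i : Fin N)
    {Ψ : Fin N → Fin N → Fin N → ℝ} (hΨ : ∀ l j k, 0 ≤ Ψ l j k)
    (h : ∀ l j, ∑ k, A l k * Ψ l j k ≤ c) : switchSum A i Ψ ≤ N * c := by
  have hc : 0 ≤ c := (Finset.sum_nonneg fun k _ => mul_nonneg (hA.nonneg i k) (hΨ i i k)).trans
    (h i i)
  calc switchSum A i Ψ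
      = ∑ l, ∑ j, movable A i l j / movableCount A i l * ∑ k, movable A l i k * Ψ l j k := by
        simp only [switchSum, switchWeight, Finset.mul_sum, smul_eq_mul]
        exact Finset.sum_congr rfl fun l _ => Finset.sum_congr rfl fun j _ =>
          Finset.sum_congr rfl fun k _ => by ring
    _ ≤ ∑ l, ∑ j, movable A i l j / movableCount A i l * c := by
        refine Finset.sum_le_sum fun l _ => Finset.sum_le_sum fun j _ => ?_
        refine mul_le_mul_of_nonneg_left (le_trans ?_ (h l j))
          (div_nonneg (movable_nonneg hA i l j) (movableCount_nonneg hA i l))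
        exact Finset.sum_le_sum fun k _ =>
          mul_le_mul_of_nonneg_right (movable_le hA l i k) (hΨ l j k)
    _ = ∑ l, movableCount A i l / movableCount A i l * c := by
        simp only [← Finset.sum_mul, ← Finset.sum_div, movableCount]
    _ ≤ ∑ _l : Fin N, c :=
        Finset.sum_le_sum fun l _ => mul_le_of_le_one_left hc (div_self_le_one _)
    _ = N * c := by simp

theorem switchSum_le_of_sum_left_le (hA : IsAdjMat N d A) (i : Fin N) {f : Fin N → ℝ}
    (hf : ∀ j, 0 ≤ f j) (h : ∑ j, A i j * f j ≤ c) :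
    switchSum A i (fun _ j _ => f j) ≤ N * c := by
  rw [switchSum_left hA i fun _ j => f j]
  calc _ ≤ ∑ _l : Fin N, c := Finset.sum_le_sum fun l _ => le_trans
        (Finset.sum_le_sum fun j _ => mul_le_mul_of_nonneg_right (movable_le hA i l j) (hf j)) h
    _ = N * c := by simp

theorem switchSum_le_of_sum_row_le (hA : IsAdjMat N d A) (i : Fin N) {f : Fin N → ℝ}
    (hf : ∀ l, 0 ≤ f l) (h : ∀ a, ∑ l, A a l * f l ≤ c) :
    switchSum A i (fun l _ _ => f l) ≤ N * c := by
  rw [switchSum_left hA i fun l _ => f l]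
  calc _ = ∑ l, movableCount A i l * f l := by
        simp only [smul_eq_mul, ← Finset.sum_mul, movableCount]
    _ ≤ ∑ l, (∑ a, A a l) * f l := by
        refine Finset.sum_le_sum fun l _ => mul_le_mul_of_nonneg_right ?_ (hf l)
        rw [hA.sum_col]
        exact movableCount_le hA i l
    _ = ∑ a, ∑ l, A a l * f l := by simp only [Finset.sum_mul]; exact Finset.sum_comm
    _ ≤ ∑ _a : Fin N, c := Finset.sum_le_sum fun a _ => h a
    _ = N * c := by simp

end SwitchSumEstimates

/-! ### The self-consistent equation -/

section SelfConsistentEquation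

variable {N d : ℕ} {A : Matrix (Fin N) (Fin N) ℝ} {i x : Fin N} {z : ℂ} {K κ : ℝ}

/-- The `x`-th column of the Green function, as an observable of the graph. -/
def greenCol (d : ℕ) (z : ℂ) (x : Fin N) (A : Matrix (Fin N) (Fin N) ℝ) (j : Fin N) : ℂ :=
  greenM N d A z j x

/-- The diagonal of the Green function, as an observable of the graph. -/
def greenDiag (d : ℕ) (z : ℂ) (A : Matrix (Fin N) (Fin N) ℝ) (j : Fin N) : ℂ :=
  greenM N d A z j j

/-- The error in the self-consistent equation `(z + Ḡ) G = -P⊥`, scaled by `q`. -/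
def selfConsistentError (d : ℕ) (z : ℂ) (i x : Fin N) (A : Matrix (Fin N) (Fin N) ℝ) : ℂ :=
  qval N d * ((z + gbar N d A z) * greenM N d A z i x + Pperp N i x)

/-- Every row of the adjacency matrix averages the moduli of each column of the Green function to
at most `κ`. -/
def RowAverageBound (d : ℕ) (z : ℂ) (κ : ℝ) (A : Matrix (Fin N) (Fin N) ℝ) : Prop :=
  ∀ l x, ∑ k, A l k * ‖greenM N d A z k x‖ ≤ d * κ

theorem qval_sq (hq : 0 < qval N d) : qval N d ^ 2 = d * (N - d) / N :=
  Real.sq_sqrt (Real.sqrt_pos.1 hq).le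

theorem selfConsistentError_eq (hA : IsAdjMat N d A) (hq : 0 < qval N d) (hz : z.im ≠ 0)
    (i x : Fin N) : selfConsistentError d z i x A =
      ∑ j, A i j • greenCol d z x A j + qval N d * (gbar N d A z * greenM N d A z i x) := by
  simp only [greenCol]
  rw [sum_smul_greenM hA hq hz, selfConsistentError]
  ring

theorem rowFluctuation_greenDiag (i : Fin N) (A : Matrix (Fin N) (Fin N) ℝ) :
    rowFluctuation (greenDiag d z) d i A =
      ∑ k, A i k • greenM N d A z k k - d * gbar N d A z := by
  simp only [rowFluctuation, greenDiag, gbar, Matrix.trace, Matrix.diag_apply, Complex.real_smul]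
  push_cast
  ring

/-- The self-consistent equation emerges from the resolvent expansion: the leading part of
`G_kx - G'_kx` is `q⁻¹ G_kk G_ix`. -/
theorem Switchable.norm_greenM_sub_sub_leading_le {l j k : Fin N} (hs : Switchable A i l j k)
    (hA : IsAdjMat N d A) (hz : z.im ≠ 0) (hq : 0 < qval N d)
    (hK : ∀ a b, ‖greenM N d A z a b‖ ≤ K) (hKq : 16 * K ≤ qval N d) (x : Fin N) :
    ‖greenM N d A z k x - greenM N d (switch A i l j k) z k x
        - (qval N d : ℂ)⁻¹ * (greenM N d A z k k * greenM N d A z i x)‖ ≤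
      (qval N d)⁻¹ * (4 * K * ‖greenM N d A z k i‖ + 4 * K * ‖greenM N d A z k l‖
        + 4 * K * ‖greenM N d A z k j‖ + K * ‖greenM N d A z l x‖ + 32 * K ^ 3 / qval N d) := by
  have hG' := hs.norm_greenM_switch_le hA hz hq hK hKq
  have hdiff := hs.norm_greenM_sub_greenM_switch_le hA hz hq hK hKq
  rw [hs.greenM_sub_greenM_switch hA hz, ← mul_sub, norm_mul, norm_inv, Complex.norm_real,
    Real.norm_of_nonneg hq.le]
  gcongr
  set G := greenM N d A z
  set G' := greenM N d (switch A i l j k) z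
  have hlx : ‖G' l x‖ ≤ ‖G l x‖ + 16 * K ^ 2 / qval N d := by
    simpa using norm_sub_le_of_le (le_refl ‖G l x‖) (hdiff l x)
  calc ‖(G k i - G k l) * (G' k x - G' j x) + (G k k - G k j) * (G' i x - G' l x)
        - G k k * G i x‖
      = ‖(G k i - G k l) * (G' k x - G' j x) - G k k * (G i x - G' i x) - G k k * G' l x
          - G k j * (G' i x - G' l x)‖ := by congr 1; ring
    _ ≤ ‖G k i - G k l‖ * ‖G' k x - G' j x‖ + ‖G k k‖ * ‖G i x - G' i x‖ + ‖G k k‖ * ‖G' l x‖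
          + ‖G k j‖ * ‖G' i x - G' l x‖ := by
        simp only [← norm_mul]
        exact norm_sub_le_of_le (norm_sub_le_of_le (norm_sub_le _ _) le_rfl) le_rfl
    _ ≤ (‖G k i‖ + ‖G k l‖) * (2 * K + 2 * K) + K * (16 * K ^ 2 / qval N d)
          + K * (‖G l x‖ + 16 * K ^ 2 / qval N d) + ‖G k j‖ * (2 * K + 2 * K) := by
        have hK0 : 0 ≤ K := (norm_nonneg _).trans (hK k k)
        gcongr
        exacts [norm_sub_le _ _, norm_sub_le_of_le (hG' k x) (hG' j x), hK k k, hdiff i x, hK k k,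
          norm_sub_le_of_le (hG' i x) (hG' l x)]
    _ = _ := by ring

section

variable (hA : IsAdjMat N d A) (hz : z.im ≠ 0) (hq : 0 < qval N d)
  (hK : ∀ a b, ‖greenM N d A z a b‖ ≤ K) (hKq : 16 * K ≤ qval N d)
  (hκ : RowAverageBound d z κ A)
include hA hz hq hK hKq hκ

theorem norm_switchSum_greenCol_sub_leading_le (i x : Fin N) :
    ‖switchSum A i (fun l j k => greenCol d z x A k - greenCol d z x (switch A i l j k) k)
        - switchSum A i (fun _ _ k =>
            (qval N d : ℂ)⁻¹ * (greenM N d A z k k * greenM N d A z i x))‖ ≤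
      (qval N d)⁻¹ * (N * (d * (13 * K * κ + 32 * K ^ 3 / qval N d))) := by
  have hK0 : 0 ≤ K := (norm_nonneg _).trans (hK i i)
  rw [← switchSum_sub]
  refine (norm_switchSum_le hA i _).trans ((switchSum_mono hA i fun l j k hs =>
    hs.norm_greenM_sub_sub_leading_le hA hz hq hK hKq x).trans ?_)
  simp only [switchSum_const_mul, switchSum_add]
  have hki := switchSum_le_of_sum_right_le hA i (fun _ _ k => norm_nonneg (greenM N d A z k i))
    fun l _ => hκ l i
  have hkl := switchSum_le_of_sum_right_le hA i (fun l _ k => norm_nonneg (greenM N d A z k l))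
    fun l _ => hκ l l
  have hkj := switchSum_le_of_sum_right_le hA i (fun _ j k => norm_nonneg (greenM N d A z k j))
    fun l j => hκ l j
  have hlx := switchSum_le_of_sum_row_le hA i (fun l => norm_nonneg (greenM N d A z l x))
    fun a => hκ a x
  have hconst := switchSum_le_of_le hA i (Ψ := fun _ _ _ => 32 * K ^ 3 / qval N d)
    (by positivity) fun _ _ _ _ => le_rfl
  calc _ ≤ (qval N d)⁻¹ * (4 * K * (N * (d * κ)) + 4 * K * (N * (d * κ)) + 4 * K * (N * (d * κ))
          + K * (N * (d * κ)) + N * (d * (32 * K ^ 3 / qval N d))) := by gcongr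
    _ = _ := by ring

theorem norm_switchSum_greenCol_sub_le (i x : Fin N)
    (hdiag : ‖rowFluctuation (greenDiag d z) d i A‖ ≤ d * κ) :
    ‖switchSum A i (fun l j k => greenCol d z x A k - greenCol d z x (switch A i l j k) k)
        - N * (qval N d * (gbar N d A z * greenM N d A z i x))‖ ≤
      (qval N d)⁻¹ * (d * (N * (13 * K * κ + 32 * K ^ 3 / qval N d) + K ^ 2 + d * K * κ)) := by
  have hN : (N : ℂ) ≠ 0 := Nat.cast_ne_zero.2 i.pos.ne'
  have hq0 : (qval N d : ℂ) ≠ 0 := Complex.ofReal_ne_zero.2 hq.ne'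
  have hq2 : (qval N d : ℂ) ^ 2 = d * (N - d) / N := by
    exact_mod_cast congrArg Complex.ofReal (qval_sq hq)
  have hleading : switchSum A i (fun _ _ k =>
        (qval N d : ℂ)⁻¹ * (greenM N d A z k k * greenM N d A z i x))
      - N * (qval N d * (gbar N d A z * greenM N d A z i x)) =
      (qval N d : ℂ)⁻¹ * (d * (-(greenM N d A z i x *
        (greenM N d A z i i + rowFluctuation (greenDiag d z) d i A)))) := by
    have hNq : (N : ℂ) * qval N d = (qval N d : ℂ)⁻¹ * (d * (N - d)) := by
      rw [eq_inv_mul_iff_mul_eq₀ hq0, mul_left_comm, ← sq, hq2, mul_div_cancel₀ _ hN]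
    have htrace : ∑ k, greenM N d A z k k = N * gbar N d A z := by
      rw [gbar, mul_inv_cancel_left₀ hN]; rfl
    rw [switchSum_right_eq hA, rowFluctuation_greenDiag i, ← mul_assoc (N : ℂ), hNq,
      ← Finset.mul_sum, ← Finset.sum_mul, htrace]
    simp only [Complex.real_smul, mul_left_comm _ (qval N d : ℂ)⁻¹, ← mul_assoc _ _
      (greenM N d A z i x), ← Finset.mul_sum, ← Finset.sum_mul]
    push_cast
    ring
  have herror := norm_switchSum_greenCol_sub_leading_le hA hz hq hK hKq hκ i x
  refine (norm_sub_le_norm_sub_add_norm_sub _ _ _).trans ((add_le_add herror le_rfl).trans ?_)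
  rw [hleading, norm_mul, norm_inv, norm_mul, norm_neg, norm_mul, Complex.norm_real,
    Real.norm_of_nonneg hq.le, Complex.norm_natCast]
  calc _ ≤ (qval N d)⁻¹ * (N * (d * (13 * K * κ + 32 * K ^ 3 / qval N d)))
        + (qval N d)⁻¹ * (d * (K * (K + d * κ))) := by
          gcongr
          exacts [(norm_nonneg _).trans (hK i i), hK i x, norm_add_le_of_le (hK i i) hdiag]
    _ = _ := by ring

theorem norm_switchDrift_sub_selfConsistentError_le (i x : Fin N)
    (hdiag : ‖rowFluctuation (greenDiag d z) d i A‖ ≤ d * κ) :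
    ‖switchDrift (greenCol d z x) i A - (N : ℝ) • selfConsistentError d z i x A‖ ≤
      2 * d * K + (qval N d)⁻¹ *
        (d * (N * (13 * K * κ + 32 * K ^ 3 / qval N d) + K ^ 2 + d * K * κ)) := by
  have hsum : ∑ j, greenCol d z x A j = 0 := sum_greenM_col hA z x
  have hsplit : switchDrift (greenCol d z x) i A - (N : ℝ) • selfConsistentError d z i x A =
      d * greenCol d z x A i - ∑ j, A i j • greenCol d z x A j +
      (switchSum A i (fun l j k => greenCol d z x A k - greenCol d z x (switch A i l j k) k)
        - N * (qval N d * (gbar N d A z * greenM N d A z i x))) := by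
    rw [switchDrift_eq hA, hsum, selfConsistentError_eq hA hq hz]
    simp only [Complex.real_smul, Complex.ofReal_natCast]
    ring
  have hself : ‖d * greenCol d z x A i‖ ≤ d * K := by
    rw [norm_mul, Complex.norm_natCast]
    gcongr
    exact hK i x
  rw [hsplit]
  refine norm_add_le_of_le ?_ (norm_switchSum_greenCol_sub_le hA hz hq hK hKq hκ i x hdiag)
  exact (norm_sub_le_of_le hself (hA.norm_sum_smul_le i fun j => hK j x)).trans_eq (by ring)

end

/-- All entries of the Green function are at most `K / (1 + |z|)`. -/
def GreenBound (d : ℕ) (z : ℂ) (K : ℝ) (A : Matrix (Fin N) (Fin N) ℝ) : Prop :=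
  ∀ a b, (1 + ‖z‖) * ‖greenM N d A z a b‖ ≤ K

theorem GreenBound.norm_greenM_le_div (h : GreenBound d z K A) (a b : Fin N) :
    ‖greenM N d A z a b‖ ≤ K / (1 + ‖z‖) :=
  (le_div_iff₀' (by positivity)).2 (h a b)

theorem GreenBound.norm_greenM_le (h : GreenBound d z K A) (a b : Fin N) :
    ‖greenM N d A z a b‖ ≤ K :=
  (le_mul_of_one_le_left (norm_nonneg _) (by simp)).trans (h a b)

theorem Switchable.norm_selfConsistentError_sub_le {l j k : Fin N} (hs : Switchable A i l j k)
    (hA : IsAdjMat N d A) (hz : z.im ≠ 0) (hq : 0 < qval N d) (hK1 : 1 ≤ K)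
    (hKq : 16 * K ≤ qval N d) (hK : GreenBound d z K A) (x : Fin N) :
    ‖selfConsistentError d z i x A - selfConsistentError d z i x (switch A i l j k)‖ ≤
      64 * K ^ 3 := by
  have hK' : K / (1 + ‖z‖) ≤ K := div_le_self (by linarith) (by simp)
  have hG' := hs.norm_greenM_switch_le hA hz hq hK.norm_greenM_le hKq
  have hdiff := hs.norm_greenM_sub_greenM_switch_le hA hz hq hK.norm_greenM_le hKq
  have hgbar' : ‖gbar N d (switch A i l j k) z‖ ≤ 2 * K :=
    norm_inv_mul_trace_le i.pos fun k => hG' k k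
  have hgbar : ‖gbar N d A z - gbar N d (switch A i l j k) z‖ ≤ 16 * K ^ 2 / qval N d := by
    rw [gbar, gbar, ← mul_sub, ← Matrix.trace_sub]
    exact norm_inv_mul_trace_le i.pos fun k => hdiff k k
  have hzdiff : ‖z‖ * ‖greenM N d A z i x - greenM N d (switch A i l j k) z i x‖ ≤
      16 * K ^ 2 / qval N d := by
    calc _ ≤ (1 + ‖z‖) * (16 * (K / (1 + ‖z‖)) ^ 2 / qval N d) := by
          gcongr
          · simp
          · exact hs.norm_greenM_sub_greenM_switch_le hA hz hq hK.norm_greenM_le_div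
              (by linarith) i x
      _ = 16 * (K / (1 + ‖z‖)) * K / qval N d := by field_simp
      _ ≤ 16 * K * K / qval N d := by gcongr
      _ = _ := by ring
  have hsplit : selfConsistentError d z i x A - selfConsistentError d z i x (switch A i l j k) =
      qval N d * (z * (greenM N d A z i x - greenM N d (switch A i l j k) z i x) +
        ((gbar N d A z - gbar N d (switch A i l j k) z) * greenM N d A z i x +
        gbar N d (switch A i l j k) z *
          (greenM N d A z i x - greenM N d (switch A i l j k) z i x))) := by
    simp only [selfConsistentError]; ring
  rw [hsplit, norm_mul, Complex.norm_real, Real.norm_of_nonneg hq.le]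
  calc _ ≤ qval N d * (16 * K ^ 2 / qval N d + (16 * K ^ 2 / qval N d * K +
        2 * K * (16 * K ^ 2 / qval N d))) := by
        gcongr
        refine norm_add_le_of_le ?_ (norm_add_le_of_le ?_ ?_) <;> rw [norm_mul]
        · exact hzdiff
        · gcongr; exact hK.norm_greenM_le i x
        · gcongr; exact hdiff i x
    _ = 16 * K ^ 2 + 48 * K ^ 3 := by field_simp; ring
    _ ≤ _ := by nlinarith [sq_nonneg K]

theorem switchVariation_selfConsistentError_le (hA : IsAdjMat N d A) (hz : z.im ≠ 0)
    (hq : 0 < qval N d) (hK1 : 1 ≤ K) (hKq : 16 * K ≤ qval N d) (hK : GreenBound d z K A)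
    (hκ : RowAverageBound d z κ A) (i x : Fin N) :
    switchVariation (greenCol d z x) i (selfConsistentError d z i x) A ≤
      64 * K ^ 3 * (N * (d * (2 * κ + 16 * K ^ 2 / qval N d))) := by
  have hj := switchSum_le_of_sum_left_le hA i (fun j => norm_nonneg (greenM N d A z j x)) (hκ i x)
  have hk := switchSum_le_of_sum_right_le hA i (fun _ _ k => norm_nonneg (greenM N d A z k x))
    fun l _ => hκ l x
  have hconst := switchSum_le_of_le hA i (Ψ := fun _ _ _ => 16 * K ^ 2 / qval N d)
    (by positivity) fun _ _ _ _ => le_rfl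
  calc switchVariation (greenCol d z x) i (selfConsistentError d z i x) A
      ≤ switchSum A i fun _ j k => 64 * K ^ 3 * (‖greenM N d A z j x‖ + ‖greenM N d A z k x‖
          + 16 * K ^ 2 / qval N d) := by
        refine switchSum_mono hA i fun l j k hs => ?_
        rw [mul_comm]
        refine mul_le_mul (hs.norm_selfConsistentError_sub_le hA hz hq hK1 hKq hK x) ?_
          (norm_nonneg _) (by positivity)
        refine (norm_sub_le_norm_sub_add_norm_sub _ (greenM N d A z k x) _).trans ?_
        exact add_le_add (norm_sub_le _ _)
          (hs.norm_greenM_sub_greenM_switch_le hA hz hq hK.norm_greenM_le hKq k x)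
    _ = 64 * K ^ 3 * (switchSum A i (fun _ j _ => ‖greenM N d A z j x‖)
          + switchSum A i (fun _ _ k => ‖greenM N d A z k x‖)
          + switchSum A i fun _ _ _ => 16 * K ^ 2 / qval N d) := by
        simp only [switchSum_const_mul, switchSum_add]
    _ ≤ 64 * K ^ 3 * (N * (d * κ) + N * (d * κ) + N * (d * (16 * K ^ 2 / qval N d))) := by gcongr
    _ = _ := by ring

section Crude

variable (hA : IsAdjMat N d A) (hz : 0 < z.im) (hzN : 1 ≤ N * z.im)
include hA hz hzN

theorem norm_greenM_le_natCast (a b : Fin N) : ‖greenM N d A z a b‖ ≤ N := by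
  refine (norm_greenM_le hA hz.ne' a b).trans ?_
  rwa [abs_of_pos hz, div_le_iff₀ hz]

variable (hq : 0 < qval N d) (hqN : qval N d ≤ N) (hdN : d ≤ N)
include hq hqN hdN

theorem norm_selfConsistentError_le (i x : Fin N) :
    ‖selfConsistentError d z i x A‖ ≤ 2 * (N : ℝ) ^ 3 := by
  have hN : (1 : ℝ) ≤ N := mod_cast i.pos
  have hG := norm_greenM_le_natCast hA hz hzN
  rw [selfConsistentError_eq hA hq hz.ne']
  refine (norm_add_le_of_le (hA.norm_sum_smul_le i fun j => hG j x) 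
    (r₂ := N * (N * N)) ?_).trans ?_
  · rw [norm_mul, norm_mul, Complex.norm_real, Real.norm_of_nonneg hq.le]
    gcongr
    exacts [norm_inv_mul_trace_le i.pos fun k => hG k k, hG i x]
  · calc (d : ℝ) * N + N * (N * N) ≤ N * N * N + N * (N * N) := by
          gcongr
          exact (Nat.cast_le.2 hdN).trans (le_mul_of_one_le_left (Nat.cast_nonneg N) hN)
      _ = _ := by ring

variable (hN : 8 ≤ N)
include hN

theorem switchVariation_selfConsistentError_le_crude (i x : Fin N) :
    switchVariation (greenCol d z x) i (selfConsistentError d z i x) A ≤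
      N * ((N : ℝ) ^ 6) ^ 2 := by
  have hN8 : (8 : ℝ) ≤ N := mod_cast hN
  have hle : switchVariation (greenCol d z x) i (selfConsistentError d z i x) A ≤
      N * (d * ((N + N) * (2 * (N : ℝ) ^ 3 + 2 * (N : ℝ) ^ 3))) := by
    refine switchSum_le_of_le hA i (by positivity) fun l j k hs => ?_
    have hA' := hs.isAdjMat_switch hA
    gcongr
    · exact norm_sub_le_of_le (norm_greenM_le_natCast hA hz hzN j x)
        (norm_greenM_le_natCast hA' hz hzN k x)
    · exact norm_sub_le_of_le (norm_selfConsistentError_le hA hz hzN hq hqN hdN i x)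
        (norm_selfConsistentError_le hA' hz hzN hq hqN hdN i x)
  calc _ ≤ N * (N * ((N + N) * (2 * (N : ℝ) ^ 3 + 2 * (N : ℝ) ^ 3))) := by
        refine hle.trans ?_
        gcongr
    _ = N * (8 * (N : ℝ) ^ 5) := by ring
    _ ≤ N * ((N : ℝ) ^ 7 * (N : ℝ) ^ 5) := by
        gcongr
        exact hN8.trans (le_self_pow₀ (by linarith) (by norm_num))
    _ = _ := by ring

theorem norm_switchDrift_sub_selfConsistentError_le_crude (i x : Fin N) :
    ‖switchDrift (greenCol d z x) i A - (N : ℝ) • selfConsistentError d z i x A‖ ≤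
      N * (N : ℝ) ^ 6 := by
  have hN8 : (8 : ℝ) ≤ N := mod_cast hN
  have hdrift : ‖switchDrift (greenCol d z x) i A‖ ≤ N * (d * (N + N)) :=
    norm_switchSum_le_of_le hA i (by positivity) fun l j k hs =>
      norm_sub_le_of_le (norm_greenM_le_natCast hA hz hzN j x)
        (norm_greenM_le_natCast (hs.isAdjMat_switch hA) hz hzN k x)
  have herror : ‖(N : ℝ) • selfConsistentError d z i x A‖ ≤ N * (2 * (N : ℝ) ^ 3) := by
    rw [norm_smul, Real.norm_natCast]
    gcongr
    exact norm_selfConsistentError_le hA hz hzN hq hqN hdN i x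
  calc _ ≤ N * (N * (N + N)) + N * (2 * (N : ℝ) ^ 3) := by
        refine (norm_sub_le_of_le hdrift herror).trans ?_
        gcongr
    _ = N * (2 * (N : ℝ) ^ 2 * 1 + 2 * (N : ℝ) ^ 3) := by ring
    _ ≤ N * (2 * (N : ℝ) ^ 2 * N + 2 * (N : ℝ) ^ 3) := by gcongr; linarith
    _ = N * (4 * (N : ℝ) ^ 3) := by ring
    _ ≤ N * ((N : ℝ) ^ 3 * (N : ℝ) ^ 3) := by
        gcongr
        exact (by linarith : (4 : ℝ) ≤ N).trans (le_self_pow₀ (by linarith) (by norm_num))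
    _ = _ := by ring

end Crude

end SelfConsistentEquation

/-! ### Concentration at an admissible scale -/

/-- The parameter range of the argument: `U` is the basic large control parameter, `η` the spectral
scale, and the sparsity `d` and the number `N * η` of eigenvalues per window are large powers of
`U`. -/
structure AdmissibleScale (N d : ℕ) (U η : ℝ) : Prop where
  thousand_le : 1000 ≤ U
  pow_le_degree : U ^ 400 ≤ d
  two_mul_degree_le : 2 * d ≤ N
  pow_le_mul_im : U ^ 100 ≤ N * η

theorem const_mul_pow_le_pow {U : ℝ} (hU : 1000 ≤ U) {c : ℝ} (hc : c ≤ 1000) {a b : ℕ}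
    (hab : a < b) : c * U ^ a ≤ U ^ b := by
  calc c * U ^ a ≤ U * U ^ a := by gcongr; exact hc.trans hU
    _ = U ^ (a + 1) := (pow_succ' U a).symm
    _ ≤ U ^ b := pow_le_pow_right₀ (by linarith) hab

namespace AdmissibleScale

variable {N d : ℕ} {U η : ℝ} (h : AdmissibleScale N d U η)
include h

theorem one_le : 1 ≤ U := by linarith [h.thousand_le]

theorem pos : 0 < U := by linarith [h.thousand_le]

theorem const_mul_pow_le {c : ℝ} (hc : c ≤ 1000) {a b : ℕ} (hab : a < b) : c * U ^ a ≤ U ^ b :=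
  const_mul_pow_le_pow h.thousand_le hc hab

theorem const_mul_pow_le_degree {c : ℝ} (hc : c ≤ 1000) {a : ℕ} (ha : a < 400) :
    c * U ^ a ≤ d :=
  (h.const_mul_pow_le hc ha).trans h.pow_le_degree

theorem thousand_le_degree : (1000 : ℝ) ≤ d := by
  simpa using h.const_mul_pow_le_degree le_rfl (a := 0) (by norm_num)

theorem degree_pos : (0 : ℝ) < d := by linarith [h.thousand_le_degree]

theorem two_mul_degree_le_cast : 2 * (d : ℝ) ≤ N := mod_cast h.two_mul_degree_le

theorem degree_le : (d : ℝ) ≤ N := by linarith [h.two_mul_degree_le_cast, h.degree_pos]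

theorem eight_le : 8 ≤ N := by
  have hN : (8 : ℝ) ≤ N := by linarith [h.thousand_le_degree, h.two_mul_degree_le_cast]
  exact_mod_cast hN

theorem card_pos : (0 : ℝ) < N := h.degree_pos.trans_le h.degree_le

theorem im_pos : 0 < η :=
  pos_of_mul_pos_right ((pow_pos h.pos 100).trans_le h.pow_le_mul_im) h.card_pos.le

theorem one_le_mul_im : 1 ≤ N * η := (one_le_pow₀ h.one_le).trans h.pow_le_mul_im

theorem qval_pos : 0 < qval N d :=
  Real.sqrt_pos.2 (div_pos (mul_pos h.degree_pos
    (by linarith [h.two_mul_degree_le_cast, h.degree_pos])) h.card_pos)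

theorem qval_sq_le : qval N d ^ 2 ≤ d := by
  rw [qval_sq h.qval_pos, div_le_iff₀ h.card_pos]
  exact mul_le_mul_of_nonneg_left (by linarith [h.degree_pos]) h.degree_pos.le

theorem degree_le_two_mul_qval_sq : (d : ℝ) ≤ 2 * qval N d ^ 2 := by
  rw [qval_sq h.qval_pos, ← mul_div_assoc, le_div_iff₀ h.card_pos, mul_left_comm]
  exact mul_le_mul_of_nonneg_left (by linarith [h.two_mul_degree_le_cast]) h.degree_pos.le

theorem pow_le_two_mul_qval : U ^ 200 ≤ 2 * qval N d := by
  refine le_of_sq_le_sq ?_ (by linarith [h.qval_pos])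
  calc (U ^ 200) ^ 2 = U ^ 400 := (pow_mul U 200 2).symm
    _ ≤ 2 * qval N d ^ 2 := h.pow_le_degree.trans h.degree_le_two_mul_qval_sq
    _ ≤ (2 * qval N d) ^ 2 := by linarith [sq_nonneg (qval N d)]

theorem const_mul_pow_le_qval {c : ℝ} (hc : c ≤ 500) {a : ℕ} (ha : a < 200) :
    c * U ^ a ≤ qval N d := by
  linarith [h.const_mul_pow_le (c := 2 * c) (by linarith) ha, h.pow_le_two_mul_qval]

theorem one_le_qval : 1 ≤ qval N d := by
  simpa using h.const_mul_pow_le_qval (c := 1) (by norm_num) (a := 0) (by norm_num)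

theorem qval_le : qval N d ≤ N :=
  (le_self_pow₀ h.one_le_qval two_ne_zero).trans (h.qval_sq_le.trans h.degree_le)

theorem const_mul_pow_div_qval_le {c : ℝ} (hc : c ≤ 500) {a b : ℕ} (hab : a + b < 200) :
    c * U ^ a / qval N d ≤ 1 / U ^ b := by
  rw [div_le_div_iff₀ h.qval_pos (pow_pos h.pos b), one_mul, mul_assoc, ← pow_add]
  exact h.const_mul_pow_le_qval hc hab

theorem const_mul_div_pow_le {c x : ℝ} (hc : c ≤ 1000) (hx : 0 ≤ x) {a b : ℕ} (hab : b < a) :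
    c * (x / U ^ a) ≤ x / U ^ b := by
  rw [← mul_div_assoc, div_le_div_iff₀ (pow_pos h.pos a) (pow_pos h.pos b), mul_comm c,
    mul_assoc]
  exact mul_le_mul_of_nonneg_left (h.const_mul_pow_le hc hab) hx

end AdmissibleScale

section RowFluctuation

variable {N d : ℕ} {A : Matrix (Fin N) (Fin N) ℝ} {z : ℂ} {U : ℝ}
  {E : Type*} [NormedAddCommGroup E] [InnerProductSpace ℝ E]
  {φ : Matrix (Fin N) (Fin N) ℝ → Fin N → E}

/-- Observables that depend at most quadratically on the entries of the Green function. -/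
structure IsQuadraticObservable (d : ℕ) (z : ℂ) (φ : Matrix (Fin N) (Fin N) ℝ → Fin N → E) :
    Prop where
  norm_le : ∀ {A K}, 1 ≤ K → (∀ a b, ‖greenM N d A z a b‖ ≤ K) → ∀ j, ‖φ A j‖ ≤ K ^ 2
  norm_sub_le : ∀ {A A' K δ}, 1 ≤ K → (∀ a b, ‖greenM N d A z a b‖ ≤ K) →
    (∀ a b, ‖greenM N d A' z a b‖ ≤ 2 * K) →
    (∀ a b, ‖greenM N d A z a b - greenM N d A' z a b‖ ≤ δ) →
    ∀ j, ‖φ A j - φ A' j‖ ≤ 3 * K * δ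

theorem isQuadraticObservable_greenCol_sq (d : ℕ) (z : ℂ) (x : Fin N) :
    IsQuadraticObservable d z fun A j => ‖greenCol d z x A j‖ ^ 2 where
  norm_le _ hG j := by
    rw [norm_pow, norm_norm]
    gcongr
    exact hG j x
  norm_sub_le hK hG hG' hdiff j := by
    rw [sq_sub_sq, norm_mul]
    refine mul_le_mul ?_ ((abs_norm_sub_norm_le _ _).trans (hdiff j x)) (norm_nonneg _)
      (by linarith)
    rw [Real.norm_of_nonneg (by positivity)]
    exact (add_le_add (hG j x) (hG' j x)).trans_eq (by ring)

theorem isQuadraticObservable_greenDiag (d : ℕ) (z : ℂ) :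
    IsQuadraticObservable (N := N) d z (greenDiag d z) where
  norm_le hK hG j := (hG j j).trans (le_self_pow₀ hK two_ne_zero)
  norm_sub_le hK _ _ hdiff j := (hdiff j j).trans
    (le_mul_of_one_le_left ((norm_nonneg _).trans (hdiff j j)) (by linarith))

namespace AdmissibleScale

variable (h : AdmissibleScale N d U z.im)
include h

theorem norm_greenM_le (hA : IsAdjMat N d A) (a b : Fin N) : ‖greenM N d A z a b‖ ≤ N :=
  norm_greenM_le_natCast hA h.im_pos h.one_le_mul_im a b

variable (hφ : IsQuadraticObservable d z φ)
include hφ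

theorem switchEstimates_rowFluctuation (hA : IsAdjMat N d A)
    (hG : GreenBound d z (U ^ 5) A) (i : Fin N) :
    switchVariation φ i (rowFluctuation φ d i) A ≤ N * (d / U ^ 80) ^ 2 ∧
      ‖switchDrift φ i A - (N : ℝ) • rowFluctuation φ d i A‖ ≤ N * (d / U ^ 80) := by
  have hU := h.pos
  have hd := h.degree_pos.le
  have hK : 1 ≤ U ^ 5 := one_le_pow₀ h.one_le
  have hKq : 16 * U ^ 5 ≤ qval N d := h.const_mul_pow_le_qval (by norm_num) (by norm_num)
  have hB : ∀ a, ‖φ A a‖ ≤ U ^ 10 := fun a =>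
    (hφ.norm_le hK hG.norm_greenM_le a).trans_eq (pow_mul U 5 2).symm
  have hB' : ∀ l j k, Switchable A i l j k → ∀ a, ‖φ A a - φ (switch A i l j k) a‖ ≤
      1 / U ^ 184 := fun l j k hs a =>
    calc _ ≤ 3 * U ^ 5 * (16 * (U ^ 5) ^ 2 / qval N d) := hφ.norm_sub_le hK hG.norm_greenM_le
          (hs.norm_greenM_switch_le hA h.im_pos.ne' h.qval_pos hG.norm_greenM_le hKq)
          (hs.norm_greenM_sub_greenM_switch_le hA h.im_pos.ne' h.qval_pos hG.norm_greenM_le hKq) a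
      _ = 48 * U ^ 15 / qval N d := by ring
      _ ≤ _ := h.const_mul_pow_div_qval_le (by norm_num) (by norm_num)
  have hB1 : 1 / U ^ 184 ≤ U ^ 10 :=
    (div_le_one_of_le₀ (one_le_pow₀ h.one_le) (by positivity)).trans (one_le_pow₀ h.one_le)
  constructor
  · refine (switchVariation_rowFluctuation_le hA (by positivity) hB hB').trans ?_
    have hB2 : 4 * U ^ 10 ≤ d * (1 / U ^ 184) := by
      rw [mul_one_div, le_div_iff₀ (by positivity), mul_assoc, ← pow_add]
      exact h.const_mul_pow_le_degree (by norm_num) (by norm_num)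
    gcongr
    calc d * ((2 * U ^ 10 + 1 / U ^ 184) * (2 * d * (1 / U ^ 184) + 2 * (U ^ 10 + 1 / U ^ 184)))
        ≤ d * ((3 * U ^ 10) * (3 * (d * (1 / U ^ 184)))) := by gcongr <;> linarith
      _ = 9 * ((d : ℝ) ^ 2 / U ^ 174) := by field_simp; ring
      _ ≤ (d : ℝ) ^ 2 / U ^ 160 :=
          h.const_mul_div_pow_le (by norm_num) (by positivity) (by norm_num)
      _ = _ := by rw [div_pow, ← pow_mul]
  · refine (norm_switchDrift_sub_rowFluctuation_le hA (by positivity) hB hB').trans ?_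
    have hself : 2 * U ^ 10 ≤ N * (1 / U ^ 184) := by
      rw [mul_one_div, le_div_iff₀ (by positivity), mul_assoc, ← pow_add]
      exact (h.const_mul_pow_le_degree (by norm_num) (by norm_num)).trans h.degree_le
    calc 2 * d * U ^ 10 + N * (d * (1 / U ^ 184))
        = d * (2 * U ^ 10) + N * (d * (1 / U ^ 184)) := by ring
      _ ≤ d * (N * (1 / U ^ 184)) + N * (d * (1 / U ^ 184)) := by gcongr
      _ = N * (2 * (d / U ^ 184)) := by ring
      _ ≤ _ := by gcongr; exact h.const_mul_div_pow_le (by norm_num) hd (by norm_num)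

theorem switchEstimates_rowFluctuation_crude (hA : IsAdjMat N d A) (i : Fin N) :
    switchVariation φ i (rowFluctuation φ d i) A ≤ N * ((N : ℝ) ^ 6) ^ 2 ∧
      ‖switchDrift φ i A - (N : ℝ) • rowFluctuation φ d i A‖ ≤ N * (N : ℝ) ^ 6 := by
  have hN8 : (8 : ℝ) ≤ N := mod_cast h.eight_le
  have hd := h.degree_le
  have hB : ∀ A, IsAdjMat N d A → ∀ a, ‖φ A a‖ ≤ (N : ℝ) ^ 2 := fun A hA =>
    hφ.norm_le (by linarith) (h.norm_greenM_le hA)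
  have hB' : ∀ l j k, Switchable A i l j k → ∀ a, ‖φ A a - φ (switch A i l j k) a‖ ≤
      2 * (N : ℝ) ^ 2 := fun l j k hs a =>
    (norm_sub_le_of_le (hB A hA a) (hB _ (hs.isAdjMat_switch hA) a)).trans_eq (two_mul _).symm
  constructor
  · refine (switchVariation_rowFluctuation_le hA (by positivity) (hB A hA) hB').trans ?_
    gcongr
    calc d * ((2 * (N : ℝ) ^ 2 + 2 * (N : ℝ) ^ 2) *
          (2 * d * (2 * (N : ℝ) ^ 2) + 2 * ((N : ℝ) ^ 2 + 2 * (N : ℝ) ^ 2)))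
        ≤ N * ((2 * (N : ℝ) ^ 2 + 2 * (N : ℝ) ^ 2) *
          (2 * N * (2 * (N : ℝ) ^ 2) + 2 * ((N : ℝ) ^ 2 + 2 * (N : ℝ) ^ 2))) := by gcongr
      _ = (N : ℝ) ^ 5 * (16 * N + 24) := by ring
      _ ≤ (N : ℝ) ^ 5 * (8 * 8 * N) := by gcongr; linarith
      _ ≤ (N : ℝ) ^ 5 * ((N : ℝ) * N * N) := by gcongr
      _ = (N : ℝ) ^ 8 := by ring
      _ ≤ (N : ℝ) ^ 12 := pow_le_pow_right₀ (by linarith) (by norm_num)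
      _ = _ := pow_mul _ 6 2
  · refine (norm_switchDrift_sub_rowFluctuation_le hA (by positivity) (hB A hA) hB').trans ?_
    calc 2 * d * (N : ℝ) ^ 2 + N * (d * (2 * (N : ℝ) ^ 2))
        ≤ 2 * N * (N : ℝ) ^ 2 + N * (N * (2 * (N : ℝ) ^ 2)) := by gcongr
      _ = N * ((N : ℝ) ^ 2 * (2 + 2 * N)) := by ring
      _ ≤ N * ((N : ℝ) ^ 2 * (8 * N)) := by gcongr; linarith
      _ ≤ N * ((N : ℝ) ^ 2 * (N * N)) := by gcongr
      _ = N * (N : ℝ) ^ 4 := by ring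
      _ ≤ N * (N : ℝ) ^ 6 := by gcongr <;> linarith

theorem pow_mul_numViolating_rowFluctuation_le (i : Fin N) (m : ℕ) :
    U ^ (2 * m + 2) * numViolating N d (fun A => ‖rowFluctuation φ d i A‖ ≤ d / U ^ 79) ≤
      momentConst m * ((regularGraphs N d).card +
        ((N : ℝ) ^ 6) ^ (2 * m + 2) * numViolating N d (GreenBound d z (U ^ 5))) := by
  have hU := h.pos
  have hβ : (1 : ℝ) ≤ d / U ^ 80 := by
    rw [le_div_iff₀ (by positivity)]
    exact h.const_mul_pow_le_degree (by norm_num) (by norm_num)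
  have hbound : (d : ℝ) / U ^ 79 = d / U ^ 80 * U := by field_simp
  rw [hbound]
  exact pow_mul_numViolating_le i.pos m hβ (by positivity) hU.le
    (fun A hA hG => h.switchEstimates_rowFluctuation hφ hA hG i)
    (fun A hA => h.switchEstimates_rowFluctuation_crude hφ hA i)

end AdmissibleScale

end RowFluctuation

section SelfConsistentConcentration

variable {N d : ℕ} {A : Matrix (Fin N) (Fin N) ℝ} {z : ℂ} {U : ℝ}

/-- The Green function is bounded by `U ^ 5`, and averages over neighbourhoods of the squared moduli
of its columns, and of its diagonal, are close to the averages over all vertices. -/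
structure SmallFluctuations (d : ℕ) (z : ℂ) (U : ℝ) (A : Matrix (Fin N) (Fin N) ℝ) : Prop where
  greenBound : GreenBound d z (U ^ 5) A
  greenCol_sq : ∀ l x,
    ‖rowFluctuation (fun A j => ‖greenCol d z x A j‖ ^ 2) d l A‖ ≤ d / U ^ 79
  greenDiag : ∀ l, ‖rowFluctuation (greenDiag d z) d l A‖ ≤ d / U ^ 79

/-- The self-consistent equation holds up to an error `U ^ (-8)`. -/
def AlmostSelfConsistent (d : ℕ) (z : ℂ) (U : ℝ) (A : Matrix (Fin N) (Fin N) ℝ) : Prop :=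
  ∀ i x, ‖selfConsistentError d z i x A‖ ≤ qval N d / U ^ 8

namespace AdmissibleScale

variable (h : AdmissibleScale N d U z.im)
include h

theorem sum_mul_norm_sq_greenM_le (hA : IsAdjMat N d A) (hs : SmallFluctuations d z U A)
    (l x : Fin N) : ∑ k, A l k * ‖greenM N d A z k x‖ ^ 2 ≤ d / U ^ 78 := by
  have hU := h.pos
  have hd := h.degree_pos.le
  have hN := h.card_pos
  have hward : ∑ k, ‖greenM N d A z k x‖ ^ 2 ≤ U ^ 5 / z.im := by
    have hsum := (isReducing_scaledAdj x.pos hA).sum_norm_sq_reducedResolvent_col h.im_pos.ne' x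
    rw [greenM_eq_reducedResolvent, hsum]
    exact div_le_div_of_nonneg_right ((Complex.im_le_norm _).trans
      (hs.greenBound.norm_greenM_le x x)) h.im_pos.le
  have hmean : (d / N : ℝ) * ∑ k, ‖greenM N d A z k x‖ ^ 2 ≤ d / U ^ 79 := by
    calc _ ≤ (d / N : ℝ) * (U ^ 5 / z.im) := by gcongr
      _ = d * (U ^ 5 / (N * z.im)) := by ring
      _ ≤ d * (U ^ 5 / U ^ 100) := by gcongr; exact h.pow_le_mul_im
      _ = 1 * (d / U ^ 95) := by field_simp
      _ ≤ _ := h.const_mul_div_pow_le (by norm_num) hd (by norm_num)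
  have hfluct := (Real.le_norm_self _).trans (hs.greenCol_sq l x)
  simp only [rowFluctuation, greenCol, smul_eq_mul] at hfluct
  calc _ ≤ 2 * (d / U ^ 79) := by linarith
    _ ≤ _ := h.const_mul_div_pow_le (by norm_num) hd (by norm_num)

theorem rowAverageBound (hA : IsAdjMat N d A) (hs : SmallFluctuations d z U A) :
    RowAverageBound d z (1 / U ^ 39) A := by
  intro l x
  have hU := h.pos
  have hsq : ∀ k, A l k ^ 2 = A l k := fun k => by
    rcases hA.eq_zero_or_one l k with h0 | h1 <;> simp [*]
  refine le_of_sq_le_sq ?_ (by positivity)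
  calc (∑ k, A l k * ‖greenM N d A z k x‖) ^ 2
      = (∑ k, A l k * (A l k * ‖greenM N d A z k x‖)) ^ 2 := by
        simp only [← mul_assoc, ← sq, hsq]
    _ ≤ (∑ k, A l k ^ 2) * ∑ k, (A l k * ‖greenM N d A z k x‖) ^ 2 :=
        Finset.sum_mul_sq_le_sq_mul_sq _ _ _
    _ = d * ∑ k, A l k * ‖greenM N d A z k x‖ ^ 2 := by simp only [mul_pow, hsq, hA.sum_row]
    _ ≤ d * (d / U ^ 78) := by gcongr; exact h.sum_mul_norm_sq_greenM_le hA hs l x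
    _ = _ := by field_simp

theorem switchVariation_le_of_smallFluctuations (hA : IsAdjMat N d A)
    (hs : SmallFluctuations d z U A) (i x : Fin N) :
    switchVariation (greenCol d z x) i (selfConsistentError d z i x) A ≤
      N * (qval N d / U ^ 9) ^ 2 := by
  have hU := h.pos
  have hq := h.qval_pos
  have hK : 16 * (U ^ 5) ^ 2 / qval N d ≤ 1 / U ^ 39 := by
    rw [← pow_mul]
    exact h.const_mul_pow_div_qval_le (by norm_num) (by norm_num)
  calc _ ≤ 64 * (U ^ 5) ^ 3 * (N * (d * (2 * (1 / U ^ 39) + 16 * (U ^ 5) ^ 2 / qval N d))) :=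
        switchVariation_selfConsistentError_le hA h.im_pos.ne' hq
          (one_le_pow₀ h.one_le) (h.const_mul_pow_le_qval (by norm_num) (by norm_num))
          hs.greenBound (h.rowAverageBound hA hs) i x
    _ ≤ 64 * (U ^ 5) ^ 3 * (N * (2 * qval N d ^ 2 * (2 * (1 / U ^ 39) + 1 / U ^ 39))) := by
        gcongr
        exact h.degree_le_two_mul_qval_sq
    _ = N * (384 * (qval N d ^ 2 / U ^ 24)) := by field_simp; ring
    _ ≤ N * (qval N d ^ 2 / U ^ 18) := by
        gcongr
        exact h.const_mul_div_pow_le (by norm_num) (by positivity) (by norm_num)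
    _ = _ := by rw [div_pow, ← pow_mul]

theorem two_mul_pow_le_inv_qval_mul : 2 * U ^ 5 ≤ (qval N d)⁻¹ * (N * (1 / U ^ 34)) := by
  have hU := h.pos
  have hq := h.qval_pos
  rw [mul_one_div, le_inv_mul_iff₀ hq, le_div_iff₀ (by positivity)]
  calc qval N d * (2 * U ^ 5) * U ^ 34 = qval N d * (2 * U ^ 39) := by ring
    _ ≤ qval N d * qval N d := by
        gcongr
        exact h.const_mul_pow_le_qval (by norm_num) (by norm_num)
    _ ≤ N := by rw [← sq]; exact h.qval_sq_le.trans h.degree_le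

theorem norm_switchDrift_sub_le_of_smallFluctuations (hA : IsAdjMat N d A)
    (hs : SmallFluctuations d z U A) (i x : Fin N) :
    ‖switchDrift (greenCol d z x) i A - (N : ℝ) • selfConsistentError d z i x A‖ ≤
      N * (qval N d / U ^ 9) := by
  have hU := h.pos
  have hq := h.qval_pos
  have hdiag : ‖rowFluctuation (greenDiag d z) d i A‖ ≤ d * (1 / U ^ 39) := by
    refine (hs.greenDiag i).trans ?_
    rw [mul_one_div]
    gcongr
    exacts [h.one_le, by norm_num]
  have hK3 : 32 * (U ^ 5) ^ 3 / qval N d ≤ 1 / U ^ 34 := by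
    rw [← pow_mul]
    exact h.const_mul_pow_div_qval_le (by norm_num) (by norm_num)
  have hK2 : (U ^ 5) ^ 2 ≤ N * (1 / U ^ 34) := by
    rw [mul_one_div, le_div_iff₀ (by positivity), ← pow_mul, ← pow_add, ← one_mul (U ^ _)]
    exact (h.const_mul_pow_le_degree (by norm_num) (by norm_num)).trans h.degree_le
  have hself := h.two_mul_pow_le_inv_qval_mul
  have hdq : (qval N d)⁻¹ * d ≤ 2 * qval N d := by
    rw [inv_mul_le_iff₀ hq]
    linarith [h.degree_le_two_mul_qval_sq]
  calc _ ≤ 2 * d * U ^ 5 + (qval N d)⁻¹ * (d * (N * (13 * U ^ 5 * (1 / U ^ 39) +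
          32 * (U ^ 5) ^ 3 / qval N d) + (U ^ 5) ^ 2 + d * U ^ 5 * (1 / U ^ 39))) :=
        norm_switchDrift_sub_selfConsistentError_le hA h.im_pos.ne' hq
          hs.greenBound.norm_greenM_le (h.const_mul_pow_le_qval (by norm_num) (by norm_num))
          (h.rowAverageBound hA hs) i x hdiag
    _ = d * (2 * U ^ 5) + (qval N d)⁻¹ * (d * (N * (13 * (1 / U ^ 34) +
          32 * (U ^ 5) ^ 3 / qval N d) + (U ^ 5) ^ 2 + d * (1 / U ^ 34))) := by
        field_simp
    _ ≤ d * ((qval N d)⁻¹ * (N * (1 / U ^ 34))) + (qval N d)⁻¹ * (d * (N * (13 * (1 / U ^ 34) +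
          1 / U ^ 34) + N * (1 / U ^ 34) + N * (1 / U ^ 34))) := by
        gcongr
        exact_mod_cast h.degree_le
    _ = N * ((qval N d)⁻¹ * d * (17 * (1 / U ^ 34))) := by ring
    _ ≤ N * (2 * qval N d * (17 * (1 / U ^ 34))) := by gcongr
    _ = N * (34 * (qval N d / U ^ 34)) := by ring
    _ ≤ _ := by
        gcongr
        exact h.const_mul_div_pow_le (by norm_num) hq.le (by norm_num)

theorem pow_mul_numViolating_selfConsistentError_le (i x : Fin N) (m : ℕ) :
    U ^ (2 * m + 2) *
        numViolating N d (fun A => ‖selfConsistentError d z i x A‖ ≤ qval N d / U ^ 8) ≤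
      momentConst m * ((regularGraphs N d).card +
        ((N : ℝ) ^ 6) ^ (2 * m + 2) * numViolating N d (SmallFluctuations d z U)) := by
  have hU := h.pos
  have hβ : 1 ≤ qval N d / U ^ 9 := by
    rw [le_div_iff₀ (by positivity)]
    exact h.const_mul_pow_le_qval (by norm_num) (by norm_num)
  have hbound : qval N d / U ^ 8 = qval N d / U ^ 9 * U := by field_simp
  rw [hbound]
  exact pow_mul_numViolating_le i.pos m hβ (by positivity) hU.le
    (fun A hA hs => ⟨h.switchVariation_le_of_smallFluctuations hA hs i x,
      h.norm_switchDrift_sub_le_of_smallFluctuations hA hs i x⟩)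
    (fun A hA => ⟨switchVariation_selfConsistentError_le_crude hA h.im_pos h.one_le_mul_im
        h.qval_pos h.qval_le (mod_cast h.degree_le) h.eight_le i x,
      norm_switchDrift_sub_selfConsistentError_le_crude hA h.im_pos h.one_le_mul_im
        h.qval_pos h.qval_le (mod_cast h.degree_le) h.eight_le i x⟩)

theorem norm_selfConsistent_le (hs : AlmostSelfConsistent d z U A) (i x : Fin N) :
    ‖(z + gbar N d A z) * greenM N d A z i x + (if i = x then 1 else 0)‖ ≤ 1 / 4 := by
  have hq := h.qval_pos
  have hU8 : 1 / U ^ 8 ≤ 1 / 8 := by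
    refine one_div_le_one_div_of_le (by norm_num) ?_
    simpa using h.const_mul_pow_le (c := 8) (by norm_num) (a := 0) (b := 8) (by norm_num)
  have hN : ‖(N : ℂ)⁻¹‖ ≤ 1 / 8 := by
    rw [norm_inv, Complex.norm_natCast, ← one_div]
    exact one_div_le_one_div_of_le (by norm_num) (mod_cast h.eight_le)
  have herror : ‖(z + gbar N d A z) * greenM N d A z i x + Pperp N i x‖ ≤ 1 / U ^ 8 := by
    have herr := hs i x
    rw [selfConsistentError, norm_mul, Complex.norm_real, Real.norm_of_nonneg hq.le,
      ← mul_one_div] at herr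
    exact le_of_mul_le_mul_left herr hq
  rw [Pperp_apply, ← add_sub_assoc] at herror
  rw [← sub_add_cancel (_ + _ : ℂ) (N : ℂ)⁻¹]
  exact (norm_add_le_of_le herror hN).trans (by linarith)

end AdmissibleScale

end SelfConsistentConcentration

/-! ### Overwhelming probability -/

section OverwhelmingProbability

variable {N d : ℕ} {P P' : Matrix (Fin N) (Fin N) ℝ → Prop}

theorem numViolating_mono (h : ∀ A, IsAdjMat N d A → P A → P' A) :
    numViolating N d P' ≤ numViolating N d P := by
  classical
  refine Nat.cast_le.2 (Finset.card_le_card fun A hA => ?_)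
  rw [Finset.mem_filter] at hA ⊢
  exact ⟨hA.1, fun hP => hA.2 (h A (mem_regularGraphs.1 hA.1) hP)⟩

theorem numViolating_and_le (P P' : Matrix (Fin N) (Fin N) ℝ → Prop) :
    numViolating N d (fun A => P A ∧ P' A) ≤ numViolating N d P + numViolating N d P' := by
  classical
  simp only [numViolating, not_and_or, Finset.filter_or]
  exact_mod_cast Finset.card_union_le _ _

theorem numViolating_forall_le {ι : Type*} [Fintype ι]
    {P : ι → Matrix (Fin N) (Fin N) ℝ → Prop} {b : ℝ} (h : ∀ i, numViolating N d (P i) ≤ b) :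
    numViolating N d (fun A => ∀ i, P i A) ≤ Fintype.card ι * b := by
  classical
  have hunion : numViolating N d (fun A => ∀ i, P i A) ≤ ∑ i, numViolating N d (P i) := by
    simp only [numViolating, not_forall]
    norm_cast
    refine (Finset.card_le_card fun A hA => ?_).trans (Finset.card_biUnion_le
      (t := fun i => (regularGraphs N d).filter fun A => ¬ P i A))
    obtain ⟨hA, i, hi⟩ := Finset.mem_filter.1 hA
    exact Finset.mem_biUnion.2 ⟨i, Finset.mem_univ i, Finset.mem_filter.2 ⟨hA, hi⟩⟩
  exact hunion.trans ((Finset.sum_le_sum fun i _ => h i).trans_eq (by simp))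

theorem pow_mul_numViolating_forall_le {P : Fin N → Fin N → Matrix (Fin N) (Fin N) ℝ → Prop}
    {D : ℕ} {b : ℝ} (hN : 0 < N) (h : ∀ i x, (N : ℝ) ^ (D + 2) * numViolating N d (P i x) ≤ b) :
    (N : ℝ) ^ D * numViolating N d (fun A => ∀ i x, P i x A) ≤ b := by
  have hpairs := numViolating_forall_le (P := fun p : Fin N × Fin N => P p.1 p.2)
    (b := b / (N : ℝ) ^ (D + 2)) fun p => (le_div_iff₀' (by positivity)).2 (h p.1 p.2)
  calc _ ≤ (N : ℝ) ^ D * (Fintype.card (Fin N × Fin N) * (b / (N : ℝ) ^ (D + 2))) := by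
        gcongr
        exact (numViolating_mono fun A _ hA i x => hA (i, x)).trans hpairs
    _ = b := by
        rw [Fintype.card_prod, Fintype.card_fin]
        push_cast
        field_simp
        ring

/-- The filter of parameters `(N, d, E)` with `N → ∞`, where `N ^ τ ≤ d ≤ N / 2` and `|E| ≤ N`. -/
def regime (τ : ℝ) : Filter (ℕ × ℕ × ℝ) :=
  comap Prod.fst atTop ⊓ 𝓟 {p | (p.1 : ℝ) ^ τ ≤ p.2.1 ∧ 2 * p.2.1 ≤ p.1 ∧ |p.2.2| ≤ p.1}

variable {τ : ℝ}

theorem eventually_regime_of_atTop {S : ℕ → Prop} (h : ∀ᶠ N in atTop, S N) :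
    ∀ᶠ p in regime τ, S p.1 :=
  (tendsto_comap.eventually h).filter_mono inf_le_left

theorem eventually_mem_regime (τ : ℝ) :
    ∀ᶠ p in regime τ, (p.1 : ℝ) ^ τ ≤ p.2.1 ∧ 2 * p.2.1 ≤ p.1 ∧ |p.2.2| ≤ p.1 :=
  (eventually_principal.2 fun _ hp => hp).filter_mono inf_le_right

theorem eventually_regime_iff {S : ℕ × ℕ × ℝ → Prop} :
    (∀ᶠ p in regime τ, S p) ↔ ∀ᶠ N : ℕ in atTop, ∀ (d : ℕ) (E : ℝ), (N : ℝ) ^ τ ≤ d → 2 * d ≤ N →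
      |E| ≤ N → S (N, d, E) := by
  rw [regime, eventually_inf_principal, eventually_comap]
  refine eventually_congr (.of_forall fun N => ⟨fun h d E hτ hd hE => h _ rfl ⟨hτ, hd, hE⟩, ?_⟩)
  rintro h ⟨_, d, E⟩ rfl ⟨hτ, hd, hE⟩
  exact h d E hτ hd hE

theorem eventually_regime_forall_energy {S : ℕ × ℕ × ℝ → Prop} (h : ∀ᶠ p in regime τ, S p) :
    ∀ᶠ p in regime τ, ∀ E : ℝ, |E| ≤ p.1 → S (p.1, p.2.1, E) :=
  eventually_regime_iff.2 <| (eventually_regime_iff.1 h).mono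
    fun _ hN d _ hτ hd _ E hE => hN d E hτ hd hE

/-- `P N d E` fails with probability at most `N ^ (-D)`, for every `D` and all large parameters in
the `τ`-regime; stated without division by the number of graphs. -/
def WithOverwhelmingProbability (τ : ℝ)
    (P : ∀ N : ℕ, ℕ → ℝ → Matrix (Fin N) (Fin N) ℝ → Prop) : Prop :=
  ∀ D : ℕ, ∀ᶠ p in regime τ,
    (p.1 : ℝ) ^ D * numViolating p.1 p.2.1 (P p.1 p.2.1 p.2.2) ≤ (regularGraphs p.1 p.2.1).card

namespace WithOverwhelmingProbability

variable {P P' Q : ∀ N : ℕ, ℕ → ℝ → Matrix (Fin N) (Fin N) ℝ → Prop}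

theorem mono (h : WithOverwhelmingProbability τ P)
    (hPP' : ∀ᶠ p in regime τ, ∀ A, IsAdjMat p.1 p.2.1 A →
      P p.1 p.2.1 p.2.2 A → P' p.1 p.2.1 p.2.2 A) :
    WithOverwhelmingProbability τ P' := fun D => by
  filter_upwards [h D, hPP'] with p hp hPP'
  exact le_trans (by gcongr; exact numViolating_mono hPP') hp

theorem of_eventually (h : ∀ᶠ p in regime τ, ∀ A, IsAdjMat p.1 p.2.1 A → P p.1 p.2.1 p.2.2 A) :
    WithOverwhelmingProbability τ P := by
  refine mono (P := fun _ _ _ _ => True) (fun D => .of_forall fun p => ?_)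
    (h.mono fun p hp A hA _ => hp A hA)
  simp [numViolating]

theorem and (h : WithOverwhelmingProbability τ P) (h' : WithOverwhelmingProbability τ P') :
    WithOverwhelmingProbability τ fun N d E A => P N d E A ∧ P' N d E A := fun D => by
  filter_upwards [h (D + 1), h' (D + 1), eventually_regime_of_atTop (eventually_ge_atTop 2)]
    with p hp hp' hN
  have hN' : (2 : ℝ) ≤ p.1 := mod_cast hN
  refine le_of_mul_le_mul_left ?_ (by positivity : (0 : ℝ) < p.1)
  calc p.1 * ((p.1 : ℝ) ^ D * _) ≤ p.1 * ((p.1 : ℝ) ^ D * (_ + _)) := by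
        gcongr
        exact numViolating_and_le _ _
    _ = (p.1 : ℝ) ^ (D + 1) * numViolating p.1 p.2.1 (P p.1 p.2.1 p.2.2) +
          (p.1 : ℝ) ^ (D + 1) * numViolating p.1 p.2.1 (P' p.1 p.2.1 p.2.2) := by ring
    _ ≤ 2 * (regularGraphs p.1 p.2.1).card := by linarith
    _ ≤ _ := by gcongr

end WithOverwhelmingProbability

/-- The control parameter `N ^ (1 / n)`. -/
def controlParam (n N : ℕ) : ℝ := (N : ℝ) ^ (n : ℝ)⁻¹

theorem controlParam_pow {n : ℕ} (hn : n ≠ 0) (N : ℕ) : controlParam n N ^ n = N :=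
  Real.rpow_inv_natCast_pow N.cast_nonneg hn

theorem one_le_controlParam (n : ℕ) {N : ℕ} (hN : 1 ≤ N) : 1 ≤ controlParam n N :=
  Real.one_le_rpow (mod_cast hN) (by positivity)

theorem tendsto_controlParam {n : ℕ} (hn : 0 < n) : Tendsto (controlParam n) atTop atTop :=
  (tendsto_rpow_atTop (by positivity)).comp tendsto_natCast_atTop_atTop

theorem WithOverwhelmingProbability.forall_of_moment_bound {n : ℕ} (hn : n ≠ 0)
    {Q : ∀ N : ℕ, ℕ → ℝ → Matrix (Fin N) (Fin N) ℝ → Prop}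
    (hQ : WithOverwhelmingProbability τ Q)
    {P : ∀ N : ℕ, ℕ → ℝ → Fin N → Fin N → Matrix (Fin N) (Fin N) ℝ → Prop}
    (h : ∀ m, ∀ᶠ p in regime τ, ∀ i x, controlParam n p.1 ^ (2 * m + 2) *
        numViolating p.1 p.2.1 (P p.1 p.2.1 p.2.2 i x) ≤
      momentConst m * ((regularGraphs p.1 p.2.1).card + ((p.1 : ℝ) ^ 6) ^ (2 * m + 2) *
        numViolating p.1 p.2.1 (Q p.1 p.2.1 p.2.2))) :
    WithOverwhelmingProbability τ fun N d E A => ∀ i x, P N d E i x A := fun D => by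
  set m := n * (D + 3) with hm
  filter_upwards [h m, hQ (6 * (2 * m + 2)), eventually_regime_of_atTop (eventually_ge_atTop 1),
    eventually_regime_of_atTop (tendsto_natCast_atTop_atTop.eventually_ge_atTop
      (2 * momentConst m))] with p hp hpQ hN hNm
  have hN0 : (0 : ℝ) < p.1 := Nat.cast_pos.2 hN
  refine pow_mul_numViolating_forall_le hN fun i x => le_of_mul_le_mul_left ?_ hN0
  have hpow : (p.1 : ℝ) ^ (D + 3) ≤ controlParam n p.1 ^ (2 * m + 2) := by
    calc (p.1 : ℝ) ^ (D + 3) = controlParam n p.1 ^ m := by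
          rw [hm, pow_mul, controlParam_pow hn]
      _ ≤ _ := pow_le_pow_right₀ (one_le_controlParam n hN) (by omega)
  calc p.1 * ((p.1 : ℝ) ^ (D + 2) * numViolating p.1 p.2.1 (P p.1 p.2.1 p.2.2 i x))
      = (p.1 : ℝ) ^ (D + 3) * numViolating p.1 p.2.1 (P p.1 p.2.1 p.2.2 i x) := by ring
    _ ≤ controlParam n p.1 ^ (2 * m + 2) * numViolating p.1 p.2.1 (P p.1 p.2.1 p.2.2 i x) :=
        mul_le_mul_of_nonneg_right hpow (numViolating_nonneg _)
    _ ≤ momentConst m * ((regularGraphs p.1 p.2.1).card + (regularGraphs p.1 p.2.1).card) := by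
        refine (hp i x).trans (mul_le_mul_of_nonneg_left ?_ (momentConst_pos m).le)
        rw [← pow_mul]
        exact add_le_add le_rfl hpQ
    _ = 2 * momentConst m * (regularGraphs p.1 p.2.1).card := by ring
    _ ≤ _ := by gcongr

end OverwhelmingProbability

/-! ### Descending through the spectral scales -/

section SelfConsistentEquation

variable {N : ℕ} {G : Matrix (Fin N) (Fin N) ℂ} {z : ℂ}

theorem norm_mul_norm_le_of_norm_mul_add_le {w g c : ℂ} {δ : ℝ} (h : ‖w * g + c‖ ≤ δ) :
    ‖w‖ * ‖g‖ ≤ δ + ‖c‖ := by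
  rw [← norm_mul, ← add_sub_cancel_right (w * g) c]
  exact norm_sub_le_of_le h le_rfl

theorem norm_le_add_two_of_norm_mul_add_one_le {m : ℂ} (h : ‖(z + m) * m + 1‖ ≤ 1 / 4) :
    ‖m‖ ≤ ‖z‖ + 2 := by
  have hprod := norm_mul_norm_le_of_norm_mul_add_le h
  have hsum : ‖m‖ - ‖z‖ ≤ ‖z + m‖ := by
    rw [add_comm]
    exact norm_sub_le_norm_add m z
  rw [norm_one] at hprod
  by_contra! hm
  nlinarith [norm_nonneg z]

variable (hG : ∀ i x,
  ‖(z + (N : ℂ)⁻¹ * G.trace) * G i x + (if i = x then 1 else 0)‖ ≤ 1 / 4)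
include hG

theorem norm_add_trace_mul_norm_le (i x : Fin N) :
    ‖z + (N : ℂ)⁻¹ * G.trace‖ * ‖G i x‖ ≤ 5 / 4 := by
  have hdelta : ‖(if i = x then 1 else 0 : ℂ)‖ ≤ 1 := by split_ifs <;> simp
  linarith [norm_mul_norm_le_of_norm_mul_add_le (hG i x)]

theorem norm_add_trace_mul_trace_add_one_le (hN : 0 < N) :
    ‖(z + (N : ℂ)⁻¹ * G.trace) * ((N : ℂ)⁻¹ * G.trace) + 1‖ ≤ 1 / 4 := by
  have hN' : (N : ℂ) ≠ 0 := Nat.cast_ne_zero.2 hN.ne'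
  have havg := norm_inv_mul_trace_le hN (M := (z + (N : ℂ)⁻¹ * G.trace) • G + 1) (Γ := 1 / 4)
    fun k => by simpa using hG k k
  rwa [trace_add, trace_smul, trace_one, Fintype.card_fin, smul_eq_mul, mul_add,
    inv_mul_cancel₀ hN', mul_left_comm] at havg

theorem norm_le_of_selfConsistent (i x : Fin N) : ‖G i x‖ ≤ 2 * (‖z‖ + 2) := by
  set m := (N : ℂ)⁻¹ * G.trace
  have hm : ‖(z + m) * m + 1‖ ≤ 1 / 4 := norm_add_trace_mul_trace_add_one_le hG i.pos
  have hlower : 3 / 4 ≤ ‖z + m‖ * ‖m‖ := by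
    have htri := norm_sub_le_norm_add 1 ((z + m) * m)
    rw [norm_one, norm_mul, add_comm 1] at htri
    linarith
  have hscaled : 3 / 4 * ‖G i x‖ ≤ 5 / 4 * (‖z‖ + 2) :=
    calc _ ≤ ‖z + m‖ * ‖m‖ * ‖G i x‖ := by gcongr
      _ = ‖z + m‖ * ‖G i x‖ * ‖m‖ := mul_right_comm _ _ _
      _ ≤ _ := by
          gcongr
          exacts [norm_add_trace_mul_norm_le hG i x, norm_le_add_two_of_norm_mul_add_one_le hm]
  linarith [norm_nonneg z]

theorem one_add_norm_mul_norm_le_of_selfConsistent (hz : 40 ≤ ‖z‖)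
    (hbound : ∀ i x, ‖G i x‖ ≤ 20) (i x : Fin N) : (1 + ‖z‖) * ‖G i x‖ ≤ 5 := by
  set m := (N : ℂ)⁻¹ * G.trace
  have hm : ‖m‖ ≤ 20 := norm_inv_mul_trace_le i.pos fun k => hbound k k
  have hlower : ‖z‖ / 2 ≤ ‖z + m‖ := by linarith [norm_sub_le_norm_add z m]
  have hscaled : ‖z‖ / 2 * ‖G i x‖ ≤ 5 / 4 :=
    (mul_le_mul_of_nonneg_right hlower (norm_nonneg _)).trans (norm_add_trace_mul_norm_le hG i x)
  nlinarith [norm_nonneg (G i x)]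

end SelfConsistentEquation

section Scale

variable {N d : ℕ} {A : Matrix (Fin N) (Fin N) ℝ} {z : ℂ} {U K K' : ℝ}

theorem GreenBound.mono (h : GreenBound d z K A) (hK : K ≤ K') : GreenBound d z K' A :=
  fun a b => (h a b).trans hK

theorem norm_mk_div_le {E η M : ℝ} (hM : 1 ≤ M) : ‖(⟨E, η / M⟩ : ℂ)‖ ≤ ‖(⟨E, η⟩ : ℂ)‖ := by
  have him : (η / M) ^ 2 ≤ η ^ 2 := by
    rw [div_pow]
    exact div_le_self (sq_nonneg η) (one_le_pow₀ hM)
  exact Real.sqrt_le_sqrt (by simpa only [Complex.normSq_mk, ← sq, add_le_add_iff_left] using him)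

theorem GreenBound.div_scale {E η M : ℝ} (h : GreenBound d ⟨E, η⟩ K A) (hA : IsAdjMat N d A)
    (hη : 0 < η) (hM : 1 ≤ M) : GreenBound d ⟨E, η / M⟩ (4 * M * K) A := fun a b => by
  have hres := (isReducing_scaledAdj a.pos hA).norm_reducedResolvent_div_le hη hM
    h.norm_greenM_le_div a b
  calc _ ≤ (1 + ‖(⟨E, η⟩ : ℂ)‖) * (4 * M * (K / (1 + ‖(⟨E, η⟩ : ℂ)‖))) := by
        gcongr
        exacts [norm_mk_div_le hM, hres]
    _ = _ := by field_simp

/-- The estimate carried from one spectral scale to the next: the Green function is at most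
`U ^ 3`, and of the optimal order `1 / |z|` once `z` is large. -/
structure ScaleEstimate (d : ℕ) (z : ℂ) (U : ℝ) (A : Matrix (Fin N) (Fin N) ℝ) : Prop where
  greenBound : GreenBound d z (U ^ 3) A
  greenBound_of_le_norm : U ≤ ‖z‖ → GreenBound d z 5 A

/-- What `ScaleEstimate` at one scale implies at the next one. -/
structure WeakScaleEstimate (d : ℕ) (z : ℂ) (U : ℝ) (A : Matrix (Fin N) (Fin N) ℝ) : Prop where
  greenBound : GreenBound d z (U ^ 5) A
  greenBound_of_le_norm : U ≤ ‖z‖ → GreenBound d z (20 * U) A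

namespace AdmissibleScale

theorem scaleEstimate_of_greenBound (h : AdmissibleScale N d U z.im) (hG : GreenBound d z 5 A) :
    ScaleEstimate d z U A where
  greenBound := hG.mono (by
    simpa using h.const_mul_pow_le (c := 5) (by norm_num) (a := 0) (b := 3) (by norm_num))
  greenBound_of_le_norm _ := hG

theorem weakScaleEstimate_div {E η : ℝ} (h : AdmissibleScale N d U η) (hA : IsAdjMat N d A)
    (hs : ScaleEstimate d ⟨E, η⟩ U A) : WeakScaleEstimate d ⟨E, η / U⟩ U A where
  greenBound := (hs.greenBound.div_scale hA h.im_pos h.one_le).mono <| by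
    calc 4 * U * U ^ 3 = 4 * U ^ 4 := by ring
      _ ≤ U ^ 5 := h.const_mul_pow_le (by norm_num) (by norm_num)
  greenBound_of_le_norm hz :=
    ((hs.greenBound_of_le_norm (hz.trans (norm_mk_div_le h.one_le))).div_scale hA h.im_pos
      h.one_le).mono (by linarith)

theorem scaleEstimate_of_almostSelfConsistent (h : AdmissibleScale N d U z.im)
    (hw : WeakScaleEstimate d z U A) (hs : AlmostSelfConsistent d z U A) :
    ScaleEstimate d z U A := by
  have hU := h.thousand_le
  rcases le_or_gt U ‖z‖ with hz | hz
  · refine h.scaleEstimate_of_greenBound (one_add_norm_mul_norm_le_of_selfConsistent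
      (h.norm_selfConsistent_le hs) (by linarith) fun i x => ?_)
    refine ((hw.greenBound_of_le_norm hz).norm_greenM_le_div i x).trans ?_
    rw [div_le_iff₀ (by positivity)]
    linarith
  · refine ⟨fun a b => ?_, fun hz' => absurd hz' hz.not_ge⟩
    calc (1 + ‖z‖) * ‖greenM N d A z a b‖ ≤ (1 + U) * (2 * (U + 2)) := by
          gcongr
          exact (norm_le_of_selfConsistent (h.norm_selfConsistent_le hs) a b).trans (by gcongr)
      _ ≤ U ^ 3 := by nlinarith [sq_nonneg U]

end AdmissibleScale

end Scale

section ScaleInduction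

/-- The spectral parameter at energy `E` and at the `s`-th scale `N / U ^ s`. -/
def spectralParam (n s N : ℕ) (E : ℝ) : ℂ := ⟨E, N / controlParam n N ^ s⟩

theorem spectralParam_zero (n N : ℕ) (E : ℝ) : spectralParam n 0 N E = ⟨E, N⟩ := by
  simp [spectralParam]

theorem spectralParam_succ (n s N : ℕ) (E : ℝ) :
    spectralParam n (s + 1) N E = ⟨E, N / controlParam n N ^ s / controlParam n N⟩ := by
  rw [spectralParam, pow_succ, div_div]

variable {τ : ℝ} {n s : ℕ}

theorem eventually_admissibleScale (hn : 0 < n) (hnτ : 400 ≤ τ * n) (hs : s + 100 ≤ 2 * n) :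
    ∀ᶠ p in regime τ,
      AdmissibleScale p.1 p.2.1 (controlParam n p.1) (spectralParam n s p.1 p.2.2).im := by
  filter_upwards [eventually_mem_regime τ, eventually_regime_of_atTop (eventually_ge_atTop 1),
    eventually_regime_of_atTop ((tendsto_controlParam hn).eventually_ge_atTop 1000)]
    with ⟨N, d, E⟩ ⟨hτ, hd, _⟩ hN hU
  have hU0 : 0 < controlParam n N := by linarith
  have hn' : (0 : ℝ) < n := Nat.cast_pos.2 hn
  refine ⟨hU, le_trans ?_ hτ, hd, ?_⟩
  · rw [controlParam, ← Real.rpow_natCast, ← Real.rpow_mul N.cast_nonneg]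
    refine Real.rpow_le_rpow_of_exponent_le (mod_cast hN) ?_
    rwa [inv_mul_le_iff₀ hn', mul_comm, Nat.cast_ofNat]
  · rw [spectralParam, ← mul_div_assoc, le_div_iff₀ (pow_pos hU0 s), ← pow_add]
    calc _ ≤ controlParam n N ^ (n + n) := pow_le_pow_right₀ (by linarith) (by omega)
      _ = _ := by rw [pow_add, controlParam_pow hn.ne']

namespace WithOverwhelmingProbability

variable (hn : 0 < n) (hnτ : 400 ≤ τ * n) (hs : s + 100 ≤ 2 * n)
  (hG : WithOverwhelmingProbability τ fun N d E =>
    GreenBound d (spectralParam n s N E) (controlParam n N ^ 5))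
include hn hnτ hs hG

theorem smallFluctuations : WithOverwhelmingProbability τ fun N d E =>
    SmallFluctuations d (spectralParam n s N E) (controlParam n N) := by
  have hscale := eventually_admissibleScale hn hnτ hs
  have hcol := hG.forall_of_moment_bound hn.ne' (P := fun N d E i x A =>
      ‖rowFluctuation (fun A j => ‖greenCol d (spectralParam n s N E) x A j‖ ^ 2) d i A‖ ≤
        d / controlParam n N ^ 79) fun m => hscale.mono fun _ h i x =>
    h.pow_mul_numViolating_rowFluctuation_le (isQuadraticObservable_greenCol_sq _ _ x) i m
  have hdiag := hG.forall_of_moment_bound hn.ne' (P := fun N d E i _ A =>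
      ‖rowFluctuation (greenDiag d (spectralParam n s N E)) d i A‖ ≤
        d / controlParam n N ^ 79) fun m => hscale.mono fun _ h i _ =>
    h.pow_mul_numViolating_rowFluctuation_le (isQuadraticObservable_greenDiag _ _) i m
  exact (hG.and (hcol.and hdiag)).mono (.of_forall fun _ _ _ ⟨hG, hcol, hdiag⟩ =>
    ⟨hG, hcol, fun l => hdiag l l⟩)

theorem almostSelfConsistent : WithOverwhelmingProbability τ fun N d E =>
    AlmostSelfConsistent d (spectralParam n s N E) (controlParam n N) :=
  (smallFluctuations hn hnτ hs hG).forall_of_moment_bound hn.ne' fun m =>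
    (eventually_admissibleScale hn hnτ hs).mono fun _ h i x =>
      h.pow_mul_numViolating_selfConsistentError_le i x m

end WithOverwhelmingProbability

variable (hn : 0 < n) (hnτ : 400 ≤ τ * n)
include hn hnτ

theorem withOverwhelmingProbability_scaleEstimate_zero (hs : 100 ≤ 2 * n) :
    WithOverwhelmingProbability τ fun N d E =>
      ScaleEstimate d (spectralParam n 0 N E) (controlParam n N) := by
  refine .of_eventually ?_
  filter_upwards [eventually_mem_regime τ, eventually_admissibleScale (s := 0) hn hnτ (by omega)]
    with ⟨N, d, E⟩ ⟨_, _, hE⟩ h A hA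
  refine h.scaleEstimate_of_greenBound fun a b => ?_
  have hN := h.card_pos
  have hbound := norm_greenM_le hA h.im_pos.ne' a b
  have hz : ‖spectralParam n 0 N E‖ ≤ N + N := by
    rw [spectralParam_zero]
    refine (Complex.norm_le_abs_re_add_abs_im _).trans (add_le_add hE (Nat.abs_cast N).le)
  have hN1 : (1 : ℝ) ≤ N := Nat.one_le_cast.2 a.pos
  rw [abs_of_pos h.im_pos] at hbound
  calc _ ≤ (N + (N + N)) * (1 / N : ℝ) := by
        gcongr
        exact hbound.trans_eq (by rw [spectralParam_zero])
    _ ≤ 5 := by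
        field_simp
        norm_num

theorem withOverwhelmingProbability_scaleEstimate :
    ∀ s, s + 100 ≤ 2 * n → WithOverwhelmingProbability τ fun N d E =>
      ScaleEstimate d (spectralParam n s N E) (controlParam n N)
  | 0, hs => withOverwhelmingProbability_scaleEstimate_zero hn hnτ (by omega)
  | s + 1, hs => by
    have hprev := withOverwhelmingProbability_scaleEstimate s (by omega)
    have hweak : WithOverwhelmingProbability τ fun N d E =>
        WeakScaleEstimate d (spectralParam n (s + 1) N E) (controlParam n N) := by
      refine hprev.mono ?_
      filter_upwards [eventually_admissibleScale (s := s) hn hnτ (by omega)] with p h A hA hA'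
      rw [spectralParam_succ]
      exact h.weakScaleEstimate_div hA hA'
    have hself := (hweak.mono (.of_forall fun _ _ _ h => h.greenBound)).almostSelfConsistent
      hn hnτ hs
    exact (hweak.and hself).mono ((eventually_admissibleScale hn hnτ hs).mono
      fun _ h _ _ hA => h.scaleEstimate_of_almostSelfConsistent hA.1 hA.2)

end ScaleInduction

/-! ### Delocalization of eigenvectors -/

section EnergyGrid

variable {N : ℕ} {E : ℝ}

/-- A grid of energies of spacing `1 / N` covering `[-N, N]`. -/
def energyGrid (N : ℕ) : Finset ℝ :=
  (Finset.Icc (-(N : ℤ) ^ 2) ((N : ℤ) ^ 2)).image fun k : ℤ => (k / N : ℝ)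

theorem card_energyGrid_le (N : ℕ) : (energyGrid N).card ≤ 2 * N ^ 2 + 1 := by
  refine Finset.card_image_le.trans ?_
  rw [Int.card_Icc, ← Nat.cast_pow]
  omega

theorem abs_le_of_mem_energyGrid (hE : E ∈ energyGrid N) : |E| ≤ N := by
  obtain ⟨k, hk, rfl⟩ := Finset.mem_image.1 hE
  obtain ⟨hk, hk'⟩ := Finset.mem_Icc.1 hk
  have habs : |(k : ℝ)| ≤ (N : ℝ) * N := by
    rw [← sq]
    exact_mod_cast abs_le.2 ⟨hk, hk'⟩
  rw [abs_div, Nat.abs_cast]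
  exact div_le_of_le_mul₀ N.cast_nonneg N.cast_nonneg habs

theorem exists_mem_energyGrid_abs_sub_le (hN : 0 < N) (hE : |E| ≤ N) :
    ∃ E' ∈ energyGrid N, |E - E'| ≤ 1 / N := by
  have hN' : (0 : ℝ) < N := Nat.cast_pos.2 hN
  obtain ⟨hlower, hupper⟩ := abs_le.1 hE
  refine ⟨(⌊N * E⌋ : ℝ) / N, Finset.mem_image_of_mem _ (Finset.mem_Icc.2 ⟨?_, ?_⟩), ?_⟩
  · rw [Int.le_floor]
    push_cast
    nlinarith [hN'.le]
  · rw [← Int.cast_le (R := ℝ)]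
    push_cast
    exact (Int.floor_le _).trans (by nlinarith)
  · have hfract : E - ⌊N * E⌋ / N = Int.fract (N * E) / N := by
      rw [Int.fract, sub_div, mul_div_cancel_left₀ _ hN'.ne']
    rw [hfract, abs_div, Nat.abs_cast, Int.abs_fract]
    gcongr
    exact (Int.fract_lt_one _).le

theorem WithOverwhelmingProbability.forall_energyGrid {τ : ℝ}
    {P : ∀ N : ℕ, ℕ → ℝ → Matrix (Fin N) (Fin N) ℝ → Prop} (h : WithOverwhelmingProbability τ P) :
    WithOverwhelmingProbability τ fun N d _ A => ∀ E ∈ energyGrid N, P N d E A := fun D => by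
  filter_upwards [eventually_regime_forall_energy (h (D + 3)),
    eventually_regime_of_atTop (eventually_ge_atTop 3)] with ⟨N, d, _⟩ hbound hN
  have hN' : (3 : ℝ) ≤ N := mod_cast hN
  have hcard : ((energyGrid N).card : ℝ) ≤ (N : ℝ) ^ 3 := by
    calc ((energyGrid N).card : ℝ) ≤ 2 * (N : ℝ) ^ 2 + 1 := mod_cast card_energyGrid_le N
      _ ≤ (N : ℝ) ^ 3 := by nlinarith [sq_nonneg (N : ℝ)]
  have hunion := numViolating_forall_le (P := fun E : energyGrid N => P N d E)
    (b := (regularGraphs N d).card / (N : ℝ) ^ (D + 3)) fun E =>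
      (le_div_iff₀' (by positivity)).2 (hbound E (abs_le_of_mem_energyGrid E.2))
  simp only [Subtype.forall, Fintype.card_coe] at hunion
  calc _ ≤ (N : ℝ) ^ D * ((N : ℝ) ^ 3 * ((regularGraphs N d).card / (N : ℝ) ^ (D + 3))) := by
        gcongr
        exact hunion.trans (by gcongr)
    _ = _ := by rw [pow_add]; field_simp

end EnergyGrid

section Eigenvector

variable {N d : ℕ} {A : Matrix (Fin N) (Fin N) ℝ} {u : Fin N → ℝ} {θ : ℝ}

theorem IsAdjMat.abs_eigenvalue_le (hA : IsAdjMat N d A) (hu : A.mulVec u = θ • u) (hu0 : u ≠ 0) :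
    |θ| ≤ d := by
  have heigen : Module.End.HasEigenvalue (Matrix.toLin' A) θ :=
    Module.End.hasEigenvalue_of_hasEigenvector
      ⟨Module.End.mem_eigenspace_iff.2 ((toLin'_apply A u).trans hu), hu0⟩
  obtain ⟨k, hk⟩ := eigenvalue_mem_ball heigen
  rw [mem_closedBall_iff_norm, hA.apply_self, sub_zero, Real.norm_eq_abs] at hk
  calc |θ| ≤ ∑ j ∈ Finset.univ.erase k, ‖A k j‖ := hk
    _ ≤ ∑ j, ‖A k j‖ :=
        Finset.sum_le_sum_of_subset_of_nonneg (Finset.erase_subset _ _) fun _ _ _ => norm_nonneg _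
    _ = d := by simp only [Real.norm_of_nonneg (hA.nonneg _ _), hA.sum_row]

theorem scaledAdj_mulVec_ofReal (hu : A.mulVec u = θ • u) :
    scaledAdj N d A *ᵥ (fun x => (u x : ℂ)) = ((θ / qval N d : ℝ) : ℂ) • fun x => (u x : ℂ) := by
  ext i
  have hi : ∑ j, (A i j : ℂ) * u j = θ * u i := mod_cast congrFun hu i
  rw [scaledAdj, smul_mulVec]
  simp only [Pi.smul_apply, mulVec, dotProduct, map_apply, smul_eq_mul, hi]
  push_cast
  ring

theorem Pperp_mulVec_ofReal (u : Fin N → ℝ) (i : Fin N) :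
    (Pperp N *ᵥ fun x => (u x : ℂ)) i = ((u i - (N : ℝ)⁻¹ * ∑ x, u x : ℝ) : ℂ) := by
  simp [mulVec, dotProduct, Pperp_apply, sub_mul, Finset.mul_sum]

theorem norm_ofReal_sub_mk_sq_le {x E η : ℝ} (hE : |x - E| ≤ η) :
    ‖(x : ℂ) - ⟨E, η⟩‖ ^ 2 ≤ 2 * η ^ 2 := by
  rw [← Complex.normSq_eq_norm_sq, Complex.normSq_apply]
  simp only [Complex.sub_re, Complex.sub_im, Complex.ofReal_re, Complex.ofReal_im]
  nlinarith [sq_le_sq' (neg_le_of_abs_le hE) (le_of_abs_le hE)]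

theorem GreenBound.natCast_mul_sq_le {E η K : ℝ} (hG : GreenBound d ⟨E, η⟩ K A) (hη : 0 < η)
    (hA : IsAdjMat N d A) (hu : A.mulVec u = θ • u) (hnorm : ∑ x, u x ^ 2 = 1)
    (hE : |θ / qval N d - E| ≤ η) (i : Fin N) : N * u i ^ 2 ≤ 4 * (N * η) * K + 2 := by
  have hN : (0 : ℝ) < N := Nat.cast_pos.2 i.pos
  set μ := (N : ℝ)⁻¹ * ∑ x, u x with hμ
  have hmean : N * μ ^ 2 ≤ 1 := by
    have hcauchy := sq_sum_le_card_mul_sum_sq (s := Finset.univ) (f := u)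
    rw [hnorm, Finset.card_univ, Fintype.card_fin, mul_one] at hcauchy
    rw [hμ, mul_pow, inv_pow, ← mul_assoc, sq (N : ℝ), mul_inv, mul_inv_cancel_left₀ hN.ne']
    exact (inv_mul_le_one₀ hN).2 hcauchy
  have hproj : (u i - μ) ^ 2 ≤ 2 * η * K := by
    have hbound := (isReducing_scaledAdj i.pos hA).norm_sq_proj_mulVec_le (z := ⟨E, η⟩) hη.ne'
      (scaledAdj_mulVec_ofReal hu) i
    simp only [Pperp_mulVec_ofReal, Complex.norm_real, Real.norm_eq_abs, sq_abs, hnorm, mul_one,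
      ← greenM_eq_reducedResolvent] at hbound
    have him : (greenM N d A ⟨E, η⟩ i i).im ≤ K :=
      (Complex.im_le_norm _).trans (hG.norm_greenM_le i i)
    have hK : 0 ≤ K := (norm_nonneg _).trans (hG.norm_greenM_le i i)
    calc _ ≤ _ := hbound
      _ ≤ ‖((θ / qval N d : ℝ) : ℂ) - ⟨E, η⟩‖ ^ 2 * (K / η) := by gcongr
      _ ≤ 2 * η ^ 2 * (K / η) := by
          gcongr
          exact norm_ofReal_sub_mk_sq_le hE
      _ = _ := by field_simp
  calc N * u i ^ 2 ≤ N * (2 * ((u i - μ) ^ 2 + μ ^ 2)) := by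
        gcongr
        nlinarith [sq_nonneg (u i - μ - μ)]
    _ = 2 * (N * (u i - μ) ^ 2 + N * μ ^ 2) := by ring
    _ ≤ 2 * (N * (2 * η * K) + 1) := by gcongr
    _ = _ := by ring

/-- All `ℓ²`-normalized real eigenvectors of `A` have entries bounded by `b`. -/
def IsDelocalized (b : ℝ) (A : Matrix (Fin N) (Fin N) ℝ) : Prop :=
  ∀ (u : Fin N → ℝ) (θ : ℝ), A.mulVec u = θ • u → ∑ i, u i ^ 2 = 1 → ∀ i, |u i| ≤ b

theorem AdmissibleScale.isDelocalized {U η : ℝ} (h : AdmissibleScale N d U η)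
    (hη : N * η = U ^ 100) (hA : IsAdjMat N d A)
    (hG : ∀ E ∈ energyGrid N, GreenBound d ⟨E, η⟩ (U ^ 3) A) :
    IsDelocalized (U ^ 53 / √N) A := fun u θ hu hnorm i => by
  have hN := h.card_pos
  have hU := h.one_le
  have hu0 : u ≠ 0 := by rintro rfl; simp at hnorm
  have hθ : |θ / qval N d| ≤ N := by
    rw [abs_div, abs_of_pos h.qval_pos]
    exact (div_le_self (abs_nonneg θ) h.one_le_qval).trans
      ((hA.abs_eigenvalue_le hu hu0).trans h.degree_le)
  obtain ⟨E, hE, hθE⟩ := exists_mem_energyGrid_abs_sub_le i.pos hθ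
  have hspacing : 1 / (N : ℝ) ≤ η := (div_le_iff₀' hN).2 h.one_le_mul_im
  have hbound := (hG E hE).natCast_mul_sq_le h.im_pos hA hu hnorm (hθE.trans hspacing) i
  refine abs_le_of_sq_le_sq ?_ (by positivity)
  rw [div_pow, Real.sq_sqrt hN.le, le_div_iff₀' hN]
  calc N * u i ^ 2 ≤ 4 * U ^ 103 + 2 * 1 := by rw [hη] at hbound; linarith
    _ ≤ 4 * U ^ 103 + 2 * U ^ 103 := by gcongr; exact one_le_pow₀ hU
    _ = 6 * U ^ 103 := by ring
    _ ≤ U ^ 106 := h.const_mul_pow_le (by norm_num) (by norm_num)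
    _ = (U ^ 53) ^ 2 := pow_mul U 53 2

theorem natCast_mul_spectralParam_im {n : ℕ} (hn : 50 ≤ n) (hN : 0 < N) (E : ℝ) :
    N * (spectralParam n (2 * n - 100) N E).im = controlParam n N ^ 100 := by
  have hU : 0 < controlParam n N := one_pos.trans_le (one_le_controlParam n hN)
  rw [spectralParam, ← mul_div_assoc, div_eq_iff (by positivity), ← pow_add,
    show 100 + (2 * n - 100) = n + n by omega, pow_add, controlParam_pow (by omega)]

theorem controlParam_pow_div_sqrt_le {n k : ℕ} {ε : ℝ} (hN : 0 < N) (hn : 0 < n)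
    (hk : k ≤ ε * n) : controlParam n N ^ k / √N ≤ (N : ℝ) ^ (ε - 1 / 2) := by
  rw [Real.rpow_sub (Nat.cast_pos.2 hN), ← Real.sqrt_eq_rpow, controlParam, ← Real.rpow_mul_natCast
    N.cast_nonneg]
  gcongr
  · exact_mod_cast hN
  · rwa [inv_mul_le_iff₀ (Nat.cast_pos.2 hn), mul_comm]

theorem withOverwhelmingProbability_isDelocalized {τ ε : ℝ} (hτ : 0 < τ) (hε : 0 < ε) :
    WithOverwhelmingProbability τ fun N _ _ => IsDelocalized ((N : ℝ) ^ (ε - 1 / 2)) := by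
  obtain ⟨n, hn⟩ := exists_nat_ge (max 50 (max (400 / τ) (53 / ε)))
  obtain ⟨hn, hnτ, hnε⟩ : 50 ≤ n ∧ 400 ≤ τ * n ∧ 53 ≤ ε * n := by
    rw [max_le_iff, max_le_iff, div_le_iff₀' hτ, div_le_iff₀' hε] at hn
    exact_mod_cast hn
  have hscale := withOverwhelmingProbability_scaleEstimate (by omega) hnτ (2 * n - 100) (by omega)
  refine hscale.forall_energyGrid.mono ?_
  filter_upwards [eventually_admissibleScale (s := 2 * n - 100) (by omega) hnτ (by omega)]
    with ⟨N, d, E⟩ h A hA hE u θ hu hnorm i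
  exact (h.isDelocalized (natCast_mul_spectralParam_im hn i.pos E) hA
    (fun E' hE' => (hE E' hE').greenBound) u θ hu hnorm i).trans
    (controlParam_pow_div_sqrt_le i.pos (by omega) hnε)

end Eigenvector

/-! ### Existence of regular graphs and the uniform probability -/

section Existence

variable {N d : ℕ}

theorem isAdjMat_circulant {S : Finset (Fin N)} [NeZero N] (h0 : 0 ∉ S) (hneg : ∀ x ∈ S, -x ∈ S) :
    IsAdjMat N S.card (circulant fun x => if x ∈ S then 1 else 0) := by
  refine ⟨Fin.circulant_isSymm_iff.2 fun x => ?_, fun i => ?_, fun i j => ?_, fun i => ?_⟩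
  · have hiff : -x ∈ S ↔ x ∈ S := ⟨fun hx => neg_neg x ▸ hneg _ hx, hneg x⟩
    simp only [hiff]
  · simp [h0]
  · rw [circulant_apply]
    split_ifs <;> simp
  · simp only [circulant_apply]
    refine ((Equiv.subLeft i).sum_comp fun x => if x ∈ S then (1 : ℝ) else 0).trans ?_
    simp

theorem exists_finset_sub_mem_card_eq (hd : d < N) (heven : Even (d * N)) :
    ∃ T : Finset ℕ, T.card = d ∧ ∀ t ∈ T, 0 < t ∧ t < N ∧ N - t ∈ T := by
  by_cases hboth : Even d ∧ Even N
  · obtain ⟨⟨a, rfl⟩, b, rfl⟩ := hboth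
    refine ⟨(Finset.Icc (b - a) (b + a)).erase b, ?_, fun t ht => ?_⟩
    · rw [Finset.card_erase_of_mem (Finset.mem_Icc.2 (by omega)), Nat.card_Icc]
      omega
    · simp only [Finset.mem_erase, Finset.mem_Icc] at ht ⊢
      omega
  · refine ⟨Finset.Icc ((N + 1 - d) / 2) ((N + d) / 2), ?_, fun t ht => ?_⟩
    · rw [Nat.card_Icc]
      grind
    · simp only [Finset.mem_Icc] at ht ⊢
      grind

theorem exists_neg_mem_card_eq [NeZero N] (hd : d < N) (heven : Even (d * N)) :
    ∃ S : Finset (Fin N), S.card = d ∧ 0 ∉ S ∧ ∀ x ∈ S, -x ∈ S := by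
  obtain ⟨T, hcard, hT⟩ := exists_finset_sub_mem_card_eq hd heven
  refine ⟨T.attachFin fun t ht => (hT t ht).2.1, by rw [Finset.card_attachFin, hcard], ?_, ?_⟩
  · rw [Finset.mem_attachFin]
    exact fun h0 => (hT _ h0).1.ne rfl
  · intro x hx
    rw [Finset.mem_attachFin] at hx ⊢
    obtain ⟨hpos, -, hsub⟩ := hT _ hx
    rwa [Fin.val_neg', Nat.mod_eq_of_lt (by omega)]

theorem regularGraphs_nonempty (hd : d < N) (heven : Even (d * N)) :
    (regularGraphs N d).Nonempty := by
  have : NeZero N := ⟨by omega⟩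
  obtain ⟨S, rfl, h0, hneg⟩ := exists_neg_mem_card_eq hd heven
  exact ⟨_, mem_regularGraphs.2 (isAdjMat_circulant h0 hneg)⟩

theorem one_sub_inv_le_PrReg {P : Matrix (Fin N) (Fin N) ℝ → Prop} {x : ℝ}
    (hne : (regularGraphs N d).Nonempty) (hx : 0 < x)
    (h : x * numViolating N d P ≤ (regularGraphs N d).card) : 1 - x⁻¹ ≤ PrReg N d P := by
  classical
  have hcard : Nat.card {A // IsAdjMat N d A} = (regularGraphs N d).card :=
    Nat.subtype_card _ fun _ => mem_regularGraphs
  have hcardP : Nat.card {A // IsAdjMat N d A ∧ P A} = ((regularGraphs N d).filter P).card :=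
    Nat.subtype_card _ fun _ => by rw [Finset.mem_filter, mem_regularGraphs]
  have hsplit : (((regularGraphs N d).filter P).card : ℝ) + numViolating N d P =
      (regularGraphs N d).card := by
    rw [numViolating]
    norm_cast
    convert Finset.card_filter_add_card_filter_not (s := regularGraphs N d) P
  rw [PrReg, hcard, hcardP, le_div_iff₀ (Nat.cast_pos.2 hne.card_pos), sub_mul, one_mul, ← hsplit]
  rw [← hsplit] at h
  rw [inv_mul_eq_div]
  linarith [(le_div_iff₀' hx).2 h]

end Existence

/-- Complete eigenvector delocalization for random `d`-regular graphs, `N^τ ≤ d ≤ N/2`. -/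
theorem eigenvector_delocalization
    (τ : ℝ) (hτ0 : 0 < τ) (hτ1 : τ < 1) (ε D : ℝ) (hε : 0 < ε) (hD : 0 < D) :
    ∃ N₀ : ℕ, ∀ N, N₀ ≤ N → ∀ d : ℕ,
      (N : ℝ) ^ τ ≤ (d : ℝ) → 2 * d ≤ N → Even (d * N) →
      1 - (N : ℝ) ^ (-D) ≤
        PrReg N d (fun A => ∀ (u : Fin N → ℝ) (θ : ℝ),
          A.mulVec u = θ • u → ∑ i, u i ^ 2 = 1 →
          ∀ i, |u i| ≤ (N : ℝ) ^ (ε - 1 / 2 : ℝ)) := by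
  obtain ⟨N₀, hN₀⟩ := eventually_atTop.1 <| eventually_regime_iff.1 <|
    withOverwhelmingProbability_isDelocalized hτ0 hε ⌈D⌉₊
  refine ⟨max N₀ 1, fun N hN d hd h2d heven => ?_⟩
  obtain ⟨hN, hN1⟩ := max_le_iff.1 hN
  have hpow : (N : ℝ) ^ D ≤ (N : ℝ) ^ ⌈D⌉₊ := by
    rw [← Real.rpow_natCast]
    exact Real.rpow_le_rpow_of_exponent_le (mod_cast hN1) (Nat.le_ceil D)
  have hviolating := hN₀ N hN d 0 hd h2d (by simp)
  rw [Real.rpow_neg N.cast_nonneg]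
  exact one_sub_inv_le_PrReg (regularGraphs_nonempty (by omega) heven) (by positivity)
    ((mul_le_mul_of_nonneg_right hpow (Nat.cast_nonneg _)).trans hviolating)

end
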